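/- arXiv:1609.07604 — 13 statements merged into one kernel-verified Lean document; each statement's English description precedes it below -/
import Mathlib

section
/- Let G be a finite group and τ an automorphism of G with τ∘τ = id. Suppose that τ is fixed-point-free on the dual of G, i.e., for every irreducible finite-dimensional complex representation π of G that is not isomorphic to the trivial representation, the representations π and π∘τ are not isomorphic. Then G is abelian and τ(g) = g⁻¹ for every g ∈ G. -/
/-- A finite-dimensional complex representation is irreducible if the space is nonzero and
has no invariant subspace other than `⊥` and `⊤`. -/
def IsIrreducibleRep {G V : Type} [Group G] [AddCommGroup V] [Module ℂ V]
    (ρ : Representation ℂ G V) : Prop :=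
  Nontrivial V ∧ ∀ p : Submodule ℂ V, (∀ (g : G), ∀ v ∈ p, ρ g v ∈ p) → p = ⊥ ∨ p = ⊤

/-- Two representations are isomorphic if there is a linear equivalence intertwining them. -/
def RepIso {G V W : Type} [Group G] [AddCommGroup V] [Module ℂ V]
    [AddCommGroup W] [Module ℂ W]
    (ρ : Representation ℂ G V) (σ : Representation ℂ G W) : Prop :=
  ∃ e : V ≃ₗ[ℂ] W, ∀ (g : G) (v : V), e (ρ g v) = σ g (e v)

lemma aux_kill {G : Type} [Group G] [Finite G] (τ : G ≃* G)
    (hfpf : ∀ (V : Type) [AddCommGroup V] [Module ℂ V] [FiniteDimensional ℂ V]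
      (ρ : Representation ℂ G V), IsIrreducibleRep ρ →
      ¬ RepIso ρ (Representation.trivial ℂ (G := G) (V := ℂ)) →
      ¬ RepIso ρ (ρ.comp τ.toMonoidHom))
    (V : Type) [AddCommGroup V] [Module ℂ V] [FiniteDimensional ℂ V]
    (ρ : Representation ℂ G V) (hρ : IsIrreducibleRep ρ)
    (A : V →ₗ[ℂ] V) (hA : ∀ g v, A (ρ (τ g) v) = ρ g (A v))
    (htriv : (∀ g v, ρ g v = v) → A = 0) : A = 0 := by
  by_cases ht : RepIso ρ (Representation.trivial ℂ (G := G) (V := ℂ))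
  · obtain ⟨e, he⟩ := ht
    exact htriv fun g v => e.injective (by simpa using he g v)
  · have h := hfpf V ρ hρ ht
    by_contra hne
    have hk : LinearMap.ker A = ⊥ ∨ LinearMap.ker A = ⊤ := by
      refine hρ.2 _ fun g v hv => ?_
      rw [LinearMap.mem_ker] at hv ⊢
      obtain ⟨g', rfl⟩ := τ.surjective g
      rw [hA, hv, map_zero]
    rcases hk with hk | hk
    · apply h
      let e := LinearEquiv.ofInjectiveEndo A (LinearMap.ker_eq_bot.mp hk)
      have hee : ∀ v, e v = A v := fun v => rfl
      refine ⟨e.symm, fun g v => ?_⟩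
      rw [LinearEquiv.symm_apply_eq, hee]
      have := hA g (e.symm v)
      rw [← hee (e.symm v), LinearEquiv.apply_symm_apply] at this
      exact this.symm
    · exact hne (LinearMap.ker_eq_top.mp hk)

lemma aux_zero {G : Type} [Group G] [Finite G] (τ : G ≃* G)
    (hfpf : ∀ (V : Type) [AddCommGroup V] [Module ℂ V] [FiniteDimensional ℂ V]
      (ρ : Representation ℂ G V), IsIrreducibleRep ρ →
      ¬ RepIso ρ (Representation.trivial ℂ (G := G) (V := ℂ)) →
      ¬ RepIso ρ (ρ.comp τ.toMonoidHom))
    (u : MonoidAlgebra ℂ G)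
    (hu : ∀ g, u * MonoidAlgebra.of ℂ G (τ g) = MonoidAlgebra.of ℂ G g * u)
    (hu0 : ∀ (S : Submodule (MonoidAlgebra ℂ G) (MonoidAlgebra ℂ G)),
      (∀ (g : G), ∀ v ∈ S, MonoidAlgebra.of ℂ G g * v = v) → ∀ v ∈ S, u * v = 0) : u = 0 := by
  have := Fintype.ofFinite G
  have : NeZero (Nat.card G : ℂ) := ⟨by exact_mod_cast Nat.card_pos.ne'⟩
  have hfd : FiniteDimensional ℂ (MonoidAlgebra ℂ G) := inferInstance
  have key : ∀ S : Submodule (MonoidAlgebra ℂ G) (MonoidAlgebra ℂ G),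
      IsSimpleModule (MonoidAlgebra ℂ G) S → ∀ v ∈ S, u * v = 0 := by
    intro S hS
    have : FiniteDimensional ℂ S :=
      inferInstanceAs (FiniteDimensional ℂ (S.restrictScalars ℂ))
    let ρ : Representation ℂ G S := Representation.ofModule' S
    have hρg : ∀ g (v : S), ρ g v = MonoidAlgebra.of ℂ G g • v := fun g v => rfl
    let A : S →ₗ[ℂ] S := Algebra.lsmul ℂ ℂ S u
    have hAv : ∀ v, A v = u • v := fun v => rfl
    have hirr : IsIrreducibleRep ρ := by
      refine ⟨IsSimpleModule.nontrivial (MonoidAlgebra ℂ G) S, fun p hp => ?_⟩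
      let q : Submodule (MonoidAlgebra ℂ G) S :=
        { p with
          smul_mem' := by
            intro r v hv
            induction r using MonoidAlgebra.induction_on with
            | of g => exact hp g v hv
            | add a b ha hb => rw [add_smul]; exact p.add_mem ha hb
            | smul c a ha => rw [smul_assoc]; exact p.smul_mem c ha }
      have hq : ∀ v, v ∈ q ↔ v ∈ p := fun v => Iff.rfl
      rcases eq_bot_or_eq_top q with h | h
      · left; ext v; rw [← hq, h]; simp
      · right; ext v; rw [← hq, h]; simp
    have hA0 : A = 0 := by
      refine aux_kill τ hfpf S ρ hirr A (fun g v => ?_) (fun ht => ?_)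
      · rw [hρg, hρg, hAv, hAv, smul_smul, smul_smul, hu]
      · refine LinearMap.ext fun v => Subtype.ext ?_
        have := hu0 S (fun g w hw => by
          have := ht g ⟨w, hw⟩
          rw [hρg] at this
          exact congrArg Subtype.val this) v v.2
        rw [hAv]
        simpa using this
    intro v hv
    have h := hAv ⟨v, hv⟩
    rw [hA0] at h
    exact (congrArg Subtype.val h).symm
  let K : Submodule (MonoidAlgebra ℂ G) (MonoidAlgebra ℂ G) :=
    sSup {S | IsSimpleModule (MonoidAlgebra ℂ G) S}
  have hK : K = ⊤ := IsSemisimpleModule.sSup_simples_eq_top _ _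
  have h1 : (1 : MonoidAlgebra ℂ G) ∈ K := by rw [hK]; trivial
  have : u * 1 = 0 := by
    have h1' : (1 : MonoidAlgebra ℂ G) ∈ ⨆ S ∈ {S : Submodule (MonoidAlgebra ℂ G) (MonoidAlgebra ℂ G) | IsSimpleModule (MonoidAlgebra ℂ G) S}, S := by
      rw [← sSup_eq_iSup]; exact h1
    rw [iSup_subtype'] at h1'
    refine Submodule.iSup_induction _ (motive := fun v => u * v = 0) h1' ?_ ?_ ?_
    · rintro ⟨S, hS⟩ v hv
      exact key S hS v hv
    · simp
    · intro x y hx hy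
      rw [mul_add, hx, hy, add_zero]
  simpa using this

/-- If `τ` is an order-two automorphism of a finite group `G` which is fixed-point-free on the
dual of `G` (no nontrivial irreducible complex representation `π` is isomorphic to `π ∘ τ`),
then `G` is abelian and `τ g = g⁻¹` for all `g`. -/
theorem fixedPointFree_on_dual_implies_abelian_inverse
    {G : Type} [Group G] [Finite G] (τ : G ≃* G)
    (hτ : ∀ g : G, τ (τ g) = g)
    (hfpf : ∀ (V : Type) [AddCommGroup V] [Module ℂ V] [FiniteDimensional ℂ V]
      (ρ : Representation ℂ G V), IsIrreducibleRep ρ →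
      ¬ RepIso ρ (Representation.trivial ℂ (G := G) (V := ℂ)) →
      ¬ RepIso ρ (ρ.comp τ.toMonoidHom)) :
    (∀ a b : G, a * b = b * a) ∧ ∀ g : G, τ g = g⁻¹ := by
  classical
  have := Fintype.ofFinite G
  let u1 : MonoidAlgebra ℂ G := ∑ g : G, MonoidAlgebra.of ℂ G (g * (τ g)⁻¹)
  let u2 : MonoidAlgebra ℂ G := ∑ g : G, MonoidAlgebra.of ℂ G g
  have hz : u1 - u2 = 0 := by
    refine aux_zero τ hfpf _ (fun h => ?_) (fun S hS v hv => ?_)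
    · rw [sub_mul, mul_sub]
      congr 1
      · simp only [u1, Finset.sum_mul, Finset.mul_sum, ← map_mul]
        refine (Fintype.sum_equiv (Equiv.mulLeft h) _ _ fun g => ?_).symm
        simp [mul_assoc]
      · simp only [u2, Finset.sum_mul, Finset.mul_sum, ← map_mul]
        exact (Equiv.sum_comp (Equiv.mulRight (τ h)) (fun g => MonoidAlgebra.of ℂ G g)).trans
          (Equiv.sum_comp (Equiv.mulLeft h) (fun g => MonoidAlgebra.of ℂ G g)).symm
    · simp only [u1, u2, sub_mul, Finset.sum_mul]
      rw [Finset.sum_congr rfl fun g _ => hS _ v hv, Finset.sum_congr rfl fun g _ => hS g v hv,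
        sub_self]
  have hsurj : ∀ x : G, ∃ g, g * (τ g)⁻¹ = x := by
    intro x
    by_contra! hx
    have h : u1.coeff x = u2.coeff x := by rw [sub_eq_zero.mp hz]
    have e1 : u1.coeff x = 0 := by
      simp [u1, MonoidAlgebra.of_apply, Finsupp.finsetSum_apply, hx]
    have e2 : u2.coeff x = 1 := by
      simp [u2, MonoidAlgebra.of_apply, Finsupp.finsetSum_apply]
    rw [e1, e2] at h
    exact zero_ne_one h
  have hinv : ∀ g : G, τ g = g⁻¹ := by
    intro x
    obtain ⟨g, rfl⟩ := hsurj x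
    simp [hτ]
  refine ⟨fun a b => ?_, hinv⟩
  have h := hinv (a * b)
  rw [map_mul, hinv, hinv, ← mul_inv_rev] at h
  exact (inv_injective h).symm
end

section
/- Let G be a finite group, V a nonzero finite-dimensional complex inner product space, π : G → U(V) an irreducible unitary representation, τ an automorphism of G, and W a self-adjoint unitary operator on V satisfying W·π(g)·W⁻¹ = π(τ(g)) for all g ∈ G. Then Σ_{g∈G} Tr(π(g))·π(g)⁻¹ + Σ_{g∈G} Tr(π(g)·W)·W·π(g)⁻¹ = (2·|G| / dim V)·id_V. -/
open scoped BigOperators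

theorem aux_schur {G V : Type} [Group G] [Fintype G] [AddCommGroup V] [Module ℂ V]
    [FiniteDimensional ℂ V] [Nontrivial V] (P : G →* Module.End ℂ V)
    (hirr : ∀ p : Submodule ℂ V, (∀ (g : G), ∀ v ∈ p, P g v ∈ p) → p = ⊥ ∨ p = ⊤)
    (X : Module.End ℂ V) :
    ∑ g : G, P g⁻¹ * X * P g =
      ((Fintype.card G : ℂ) * LinearMap.trace ℂ V X / (Module.finrank ℂ V : ℂ)) • 1 := by
  set T := ∑ g : G, P g⁻¹ * X * P g with hT
  have hinv : ∀ h : G, P h⁻¹ * P h = 1 := fun h => by rw [← map_mul]; simp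
  have hinv' : ∀ h : G, P h * P h⁻¹ = 1 := fun h => by rw [← map_mul]; simp
  have hcomm : ∀ h : G, T * P h = P h * T := by
    intro h
    rw [hT, Finset.sum_mul, Finset.mul_sum]
    refine Fintype.sum_equiv (Equiv.mulRight h) _ _ fun g => ?_
    simp only [Equiv.coe_mulRight, mul_inv_rev, map_mul, ← mul_assoc, hinv', one_mul]
  obtain ⟨c, hc⟩ := Module.End.exists_eigenvalue T
  have htop : Module.End.eigenspace T c = ⊤ := by
    refine (hirr _ ?_).resolve_left hc
    intro g v hv
    rw [Module.End.mem_eigenspace_iff] at hv ⊢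
    have := congrArg (fun f : Module.End ℂ V => f v) (hcomm g)
    simp only [Module.End.mul_apply] at this
    rw [this, hv, map_smul]
  have hTc : T = c • (1 : Module.End ℂ V) := by
    ext v
    have : v ∈ Module.End.eigenspace T c := htop ▸ Submodule.mem_top
    simpa using Module.End.mem_eigenspace_iff.1 this
  have htr : LinearMap.trace ℂ V T = Fintype.card G * LinearMap.trace ℂ V X := by
    rw [hT, map_sum]
    rw [Finset.sum_congr rfl (g := fun _ => LinearMap.trace ℂ V X)]
    · simp
    · intro g _
      rw [LinearMap.trace_mul_comm, ← mul_assoc, hinv', one_mul]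
  have hd : (Module.finrank ℂ V : ℂ) ≠ 0 := by
    exact_mod_cast (Module.finrank_pos (R := ℂ) (M := V)).ne'
  have h2 : c * (Module.finrank ℂ V : ℂ) = Fintype.card G * LinearMap.trace ℂ V X := by
    rw [← htr, hTc]; simp
  rw [hTc, ← h2, mul_div_cancel_right₀ _ hd]

theorem aux_key {G V : Type} [Group G] [Fintype G] [AddCommGroup V] [Module ℂ V]
    [FiniteDimensional ℂ V] [Nontrivial V] (P : G →* Module.End ℂ V)
    (hirr : ∀ p : Submodule ℂ V, (∀ (g : G), ∀ v ∈ p, P g v ∈ p) → p = ⊥ ∨ p = ⊤)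
    (A : Module.End ℂ V) :
    ∑ g : G, LinearMap.trace ℂ V (P g * A) • P g⁻¹ =
      ((Fintype.card G : ℂ) / (Module.finrank ℂ V : ℂ)) • A := by
  ext u
  let b := Module.finBasis ℂ V
  have h1 : ∀ i, ∑ g : G, b.coord i (P g (A (b i))) • P g⁻¹ u =
      ((Fintype.card G : ℂ) / (Module.finrank ℂ V : ℂ)) • (b.coord i u • A (b i)) := by
    intro i
    have := congrArg (fun f : Module.End ℂ V => f (A (b i)))
      (aux_schur P hirr ((b.coord i).smulRight u))
    simp only [LinearMap.sum_apply, Module.End.mul_apply, LinearMap.smulRight_apply, map_smul,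
      LinearMap.smul_apply, Module.End.one_apply, LinearMap.trace_smulRight] at this
    rw [this, smul_smul]
    congr 1
    ring
  have h2 : ∀ B : Module.End ℂ V, LinearMap.trace ℂ V B = ∑ i, b.coord i (B (b i)) := by
    intro B
    rw [LinearMap.trace_eq_matrix_trace ℂ b, Matrix.trace]
    simp [LinearMap.toMatrix_apply]
  simp only [LinearMap.sum_apply, LinearMap.smul_apply, h2, Finset.sum_smul, Module.End.mul_apply]
  rw [Finset.sum_comm, Finset.sum_congr rfl fun i _ => h1 i, ← Finset.smul_sum]
  congr 1
  conv_rhs => rw [← b.sum_repr u, map_sum]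
  simp


/-- For an irreducible unitary representation `π` of a finite group `G` on a nonzero
finite-dimensional complex inner product space `V`, an automorphism `τ` of `G`, and a
self-adjoint unitary `W` with `W π(g) W⁻¹ = π(τ g)`, one has
`Σ_g Tr(π g) • π(g)⁻¹ + Σ_g Tr(π g ∘ W) • (W ∘ π(g)⁻¹) = (2|G| / dim V) • id`. -/
theorem formal_codegree_of_selfdual_twist
    {G : Type} [Group G] [Fintype G]
    {V : Type} [NormedAddCommGroup V] [InnerProductSpace ℂ V]
    [FiniteDimensional ℂ V] [Nontrivial V]
    (π : G →* (V ≃ₗᵢ[ℂ] V))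
    (hirr : ∀ p : Submodule ℂ V, (∀ (g : G), ∀ v ∈ p, π g v ∈ p) → p = ⊥ ∨ p = ⊤)
    (τ : G ≃* G)
    (W : V →ₗ[ℂ] V)
    (hWsa : LinearMap.adjoint W = W)
    (hWunit : W ∘ₗ W = LinearMap.id)
    (hWint : ∀ g : G,
      W ∘ₗ ((π g).toLinearEquiv : V →ₗ[ℂ] V) ∘ₗ W = ((π (τ g)).toLinearEquiv : V →ₗ[ℂ] V)) :
    (∑ g : G, (LinearMap.trace ℂ V ((π g).toLinearEquiv : V →ₗ[ℂ] V)) •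
        ((π g⁻¹).toLinearEquiv : V →ₗ[ℂ] V))
      + (∑ g : G, (LinearMap.trace ℂ V (((π g).toLinearEquiv : V →ₗ[ℂ] V) ∘ₗ W)) •
        (W ∘ₗ ((π g⁻¹).toLinearEquiv : V →ₗ[ℂ] V)))
      = ((2 * (Fintype.card G : ℂ)) / (Module.finrank ℂ V : ℂ)) • LinearMap.id := by
  let P : G →* Module.End ℂ V :=
    { toFun := fun g => ((π g).toLinearEquiv : V →ₗ[ℂ] V)
      map_one' := by ext v; simp
      map_mul' := fun g h => by ext v; simp }
  have k := aux_key P hirr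
  have k1 := k 1
  have k2 := congrArg (fun f => W * f) (k W)
  simp only [Finset.mul_sum, mul_smul_comm] at k2
  have hW : W * W = 1 := hWunit
  rw [hW] at k2
  rw [show (2 * (Fintype.card G : ℂ)) / (Module.finrank ℂ V : ℂ) =
    (Fintype.card G : ℂ) / (Module.finrank ℂ V : ℂ) +
    (Fintype.card G : ℂ) / (Module.finrank ℂ V : ℂ) by ring, add_smul]
  simp only [mul_one] at k1
  exact congrArg₂ (· + ·) k1 k2
end

section
/- Let G be a finite abelian group, written additively. For every 2-cocycle ω on G with values in 𝕋 there exists a cohomologous 2-cocycle ω' that is normalized and in addition satisfies ω'(g,h)·ω'(h,g) = 1 and ω'(g,h) = ω'(−g,−h) for all g,h ∈ G. -/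
/-- A `𝕋`-valued 2-cocycle on an additive group, modelled as a ℂ-valued function of modulus one
satisfying the cocycle identity. -/
def IsTCocycle {G : Type} [AddCommGroup G] (ω : G → G → ℂ) : Prop :=
  (∀ g h : G, ‖ω g h‖ = 1) ∧
  (∀ g h k : G, ω g h * ω (g + h) k = ω h k * ω g (h + k))

@[ext] structure CExt (A G : Type) where
  a : A
  g : G

/-- The abelian extension attached to a symmetric normalized cocycle. -/
@[reducible] def cextGroup {A G : Type} [AddCommGroup A] [AddCommGroup G] (s : G → G → A)
    (hc : ∀ g h k, s g h + s (g + h) k = s h k + s g (h + k))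
    (hs : ∀ g h, s g h = s h g) (h0 : ∀ g, s 0 g = 0) : AddCommGroup (CExt A G) where
  add x y := ⟨x.a + y.a + s x.g y.g, x.g + y.g⟩
  zero := ⟨0, 0⟩
  neg x := ⟨-x.a - s x.g (-x.g), -x.g⟩
  add_assoc x y z := by
    refine CExt.ext ?_ (add_assoc _ _ _)
    change x.a + y.a + s x.g y.g + z.a + s (x.g + y.g) z.g
      = x.a + (y.a + z.a + s y.g z.g) + s x.g (y.g + z.g)
    linear_combination (norm := module) (1 : ℤ) • hc x.g y.g z.g
  zero_add x := by
    refine CExt.ext ?_ (zero_add _)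
    change 0 + x.a + s 0 x.g = x.a
    simp [h0]
  add_zero x := by
    refine CExt.ext ?_ (add_zero _)
    change x.a + 0 + s x.g 0 = x.a
    simp [h0, hs x.g 0]
  add_comm x y := by
    refine CExt.ext ?_ (add_comm _ _)
    change x.a + y.a + s x.g y.g = y.a + x.a + s y.g x.g
    rw [hs x.g y.g, add_comm x.a]
  neg_add_cancel x := by
    refine CExt.ext ?_ (neg_add_cancel _)
    change -x.a - s x.g (-x.g) + x.a + s (-x.g) x.g = 0
    rw [hs (-x.g) x.g]; abel
  nsmul := @nsmulRec _ ⟨⟨0, 0⟩⟩ ⟨fun x y => ⟨x.a + y.a + s x.g y.g, x.g + y.g⟩⟩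
  zsmul := @zsmulRec _ ⟨⟨0, 0⟩⟩ ⟨fun x y => ⟨x.a + y.a + s x.g y.g, x.g + y.g⟩⟩
    ⟨fun x => ⟨-x.a - s x.g (-x.g), -x.g⟩⟩
    (@nsmulRec _ ⟨⟨0, 0⟩⟩ ⟨fun x y => ⟨x.a + y.a + s x.g y.g, x.g + y.g⟩⟩)

theorem exists_nu {A G : Type} [AddCommGroup A] [DivisibleBy A ℤ] [AddCommGroup G]
    (w : G → G → A)
    (hc : ∀ g h k, w g h + w (g + h) k = w h k + w g (h + k))
    (hl : ∀ g, w 0 g = 0) (hr : ∀ g, w g 0 = 0) :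
    ∃ ν : G → A, (∀ g h, w g h + w h g + ν g + ν h = ν (g + h)) ∧
      ∀ g, g + g = 0 → ν g = - w g g := by
  let _ := cextGroup (fun g h => w g h + w h g)
    (by
      intro g h k
      have h1 := hc g h k
      have h2 := hc k h g
      rw [add_comm k h, add_comm h g] at h2
      linear_combination (norm := module) (1 : ℤ) • h1 - (1 : ℤ) • h2)
    (fun g h => add_comm _ _) (fun g => by simp [hl, hr])
  have addE : ∀ x y : CExt A G,
    x + y = ⟨x.a + y.a + (w x.g y.g + w y.g x.g), x.g + y.g⟩ := fun _ _ => rfl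
  let S : AddSubgroup (CExt A G) :=
    { carrier := {x | x.g + x.g = 0}
      zero_mem' := add_zero (0 : G)
      add_mem' := by
        intro x y hx hy
        change x.g + y.g + (x.g + y.g) = 0
        rw [add_add_add_comm]
        change x.g + x.g = 0 at hx
        change y.g + y.g = 0 at hy
        rw [hx, hy, add_zero]
      neg_mem' := by
        intro x hx
        change x.g + x.g = 0 at hx
        change -x.g + -x.g = 0
        rw [← neg_add, hx, neg_zero] }
  let f : S →+ A := AddMonoidHom.mk' (fun x => x.1.a + w x.1.g x.1.g) (by
    rintro ⟨⟨a, g⟩, hg⟩ ⟨⟨b, h⟩, hh⟩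
    change g + g = 0 at hg
    change h + h = 0 at hh
    change a + b + (w g h + w h g) + w (g + h) (g + h) = a + w g g + (b + w h h)
    have h1 := hc g h (g + h)
    have h2 := hc h h g
    rw [show h + (g + h) = g by rw [add_comm g h, ← add_assoc, hh, zero_add]] at h1
    rw [hh, hl, add_comm h g] at h2
    linear_combination (norm := module) (1 : ℤ) • h1 - (1 : ℤ) • h2)
  obtain ⟨F, hF⟩ := (Module.Baer.of_divisible A).extension_property_addMonoidHom
    S.subtype S.subtype_injective f
  have hF' : ∀ a g, g + g = 0 → F ⟨a, g⟩ = a + w g g := fun a g hg =>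
    DFunLike.congr_fun hF ⟨⟨a, g⟩, hg⟩
  refine ⟨fun g => - F ⟨0, g⟩, ?_, ?_⟩
  · intro g h
    have h1 := F.map_add ⟨0, g⟩ ⟨0, h⟩
    have h2 := F.map_add ⟨w g h + w h g, 0⟩ ⟨0, g + h⟩
    rw [hF' _ _ (add_zero 0)] at h2
    simp only [addE, hl, hr, add_zero, zero_add] at h1 h2
    linear_combination (norm := module) (1 : ℤ) • h1 - (1 : ℤ) • h2
  · intro g hg
    simp [hF' _ _ hg]

theorem exists_mu {A G : Type} [AddCommGroup A] [DivisibleBy A ℤ] [AddCommGroup G] [Fintype G]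
    (w : G → G → A)
    (hc : ∀ g h k, w g h + w (g + h) k = w h k + w g (h + k))
    (hl : ∀ g, w 0 g = 0) (hr : ∀ g, w g 0 = 0) :
    ∃ μ : G → A, μ 0 = 0 ∧ (∀ g, w g (-g) + μ g + μ (-g) = 0) ∧
      ∀ g h, w g h + w h g + (μ g + μ g) + (μ h + μ h) = μ (g + h) + μ (g + h) := by
  classical
  obtain ⟨ν, h1, h2⟩ := exists_nu w hc hl hr
  have hsym : ∀ g, w g (-g) = w (-g) g := by
    intro g
    have := hc g (-g) g
    simpa [hl, hr] using this
  have hν0 : ν 0 = 0 := by simpa [hl] using h2 0 (add_zero 0)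
  have hroot : ∀ g, ∃ r : A, r + r = ν g ∧ (g = 0 → r = 0) := by
    intro g
    by_cases hg : g = 0
    · exact ⟨0, by simp [hg, hν0], fun _ => rfl⟩
    · refine ⟨DivisibleBy.div (ν g) (2 : ℤ), ?_, fun h => absurd h hg⟩
      rw [← two_zsmul]
      exact DivisibleBy.div_cancel _ two_ne_zero
  choose r hr2 hr0 using hroot
  let e := Fintype.equivFin G
  let μ : G → A := fun g => if e g ≤ e (-g) then r g else - w g (-g) - r (-g)
  have hμ : ∀ g, μ g + μ g = ν g := by
    intro g
    by_cases h : e g ≤ e (-g)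
    · simp only [μ, if_pos h, hr2]
    · simp only [μ, if_neg h]
      have a := h1 g (-g)
      rw [add_neg_cancel, hν0, ← hsym] at a
      have b := hr2 (-g)
      linear_combination (norm := module) (-1 : ℤ) • a - (1 : ℤ) • b
  have hp : ∀ g, e g ≤ e (-g) → w g (-g) + μ g + μ (-g) = 0 := by
    intro g h
    rcases eq_or_lt_of_le h with h | h
    · have hg : g = -g := e.injective h
      have hgg : g + g = 0 := by
        nth_rewrite 2 [hg]
        exact add_neg_cancel g
      rw [← hg, add_assoc, hμ, h2 g hgg, add_neg_cancel]
    · have h' : ¬ e (-g) ≤ e (- -g) := by rw [neg_neg]; exact not_le.2 h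
      simp only [μ, if_pos h.le, if_neg h']
      rw [neg_neg, hsym]; abel
  refine ⟨μ, ?_, ?_, ?_⟩
  · simp [μ, hr0 0 rfl]
  · intro g
    rcases le_total (e g) (e (-g)) with h | h
    · exact hp g h
    · have := hp (-g) (by rwa [neg_neg])
      rw [neg_neg, ← hsym] at this
      rw [← this]; abel
  · intro g h
    rw [hμ, hμ, hμ, h1]

theorem exists_add {A G : Type} [AddCommGroup A] [DivisibleBy A ℤ] [AddCommGroup G] [Fintype G]
    (w : G → G → A)
    (hc : ∀ g h k, w g h + w (g + h) k = w h k + w g (h + k)) :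
    ∃ (v : G → G → A) (μ : G → A),
      (∀ g h k, v g h + v (g + h) k = v h k + v g (h + k)) ∧
      (∀ g h, v g h = w g h + μ g + μ h - μ (g + h)) ∧
      (∀ g, v g 0 = 0) ∧ (∀ g, v 0 g = 0) ∧ (∀ g, v g (-g) = 0) ∧
      (∀ g h, v g h + v h g = 0) ∧ (∀ g h, v g h = v (-g) (-h)) := by
  have el : ∀ g, w 0 g = w 0 0 := fun g => by
    have := hc 0 0 g
    simp only [zero_add] at this
    exact (add_right_cancel this).symm
  have er : ∀ g, w g 0 = w 0 0 := fun g => by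
    have := hc g 0 0
    simp only [add_zero] at this
    exact add_right_cancel this
  obtain ⟨μ, m0, m1, m2⟩ := exists_mu (fun g h => w g h - w 0 0)
    (fun g h k => by linear_combination (norm := module) (1 : ℤ) • hc g h k)
    (fun g => by simp [el]) (fun g => by simp [er])
  let v : G → G → A := fun g h => w g h + (μ g - w 0 0) + (μ h - w 0 0) - (μ (g + h) - w 0 0)
  have vc : ∀ g h k, v g h + v (g + h) k = v h k + v g (h + k) := by
    intro g h k
    simp only [v, ← add_assoc]
    have := hc g h k
    linear_combination (norm := module) (1 : ℤ) • this
  have vr : ∀ g, v g 0 = 0 := fun g => by simp [v, er, m0]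
  have vl : ∀ g, v 0 g = 0 := fun g => by simp [v, el, m0]
  have vn : ∀ g, v g (-g) = 0 := fun g => by
    have := m1 g
    simp only [v, add_neg_cancel, m0]
    linear_combination (norm := module) (1 : ℤ) • this
  have va : ∀ g h, v g h + v h g = 0 := fun g h => by
    have := m2 g h
    simp only [v, add_comm h g]
    linear_combination (norm := module) (1 : ℤ) • this
  refine ⟨v, fun g => μ g - w 0 0, vc, fun g h => rfl, vr, vl, vn, va, fun g h => ?_⟩
  have a := vc g h (-h)
  rw [vn, add_neg_cancel, vr] at a
  have b := vc (g + h) (-h) (-g)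
  rw [add_neg_cancel_right, vn, show -h + -g = -(g + h) by abel, vn] at b
  have c := va (-g) (-h)
  linear_combination (norm := module) (1 : ℤ) • a - (1 : ℤ) • b - (1 : ℤ) • c

noncomputable instance circleDiv : DivisibleBy (Additive Circle) ℤ :=
  Function.Surjective.divisibleBy Circle.expHom
    (fun z => Circle.exp_surjective z.toMul) (fun x n => map_zsmul Circle.expHom n x)

/-- Every `𝕋`-valued 2-cocycle on a finite abelian group is cohomologous (via a `𝕋`-valued
function `μ`) to a normalized cocycle `ω'` satisfying in addition
`ω'(g,h)·ω'(h,g) = 1` and `ω'(g,h) = ω'(−g,−h)`. -/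
theorem exists_normalized_antisymmetric_cocycle
    {G : Type} [AddCommGroup G] [Fintype G]
    (ω : G → G → ℂ) (hω : IsTCocycle ω) :
    ∃ ω' : G → G → ℂ, IsTCocycle ω' ∧
      (∃ μ : G → ℂ, (∀ g : G, ‖μ g‖ = 1) ∧
        ∀ g h : G, ω' g h = ω g h * μ g * μ h * (μ (g + h))⁻¹) ∧
      (∀ g : G, ω' g 0 = 1) ∧ (∀ g : G, ω' 0 g = 1) ∧ (∀ g : G, ω' g (-g) = 1) ∧
      (∀ g h : G, ω' g h * ω' h g = 1) ∧
      (∀ g h : G, ω' g h = ω' (-g) (-h)) := by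
  obtain ⟨hn, hc⟩ := hω
  let W : G → G → Additive Circle := fun g h =>
    Additive.ofMul ⟨ω g h, mem_sphere_zero_iff_norm.2 (hn g h)⟩
  have tr : ∀ x y : Additive Circle, x = y ↔ (x.toMul : ℂ) = (y.toMul : ℂ) := fun x y =>
    ⟨fun h => by rw [h], fun h => Additive.toMul.injective (Circle.ext h)⟩
  have hW : ∀ g h, ((W g h).toMul : ℂ) = ω g h := fun g h => rfl
  obtain ⟨v, μ, vc, vm, vr, vl, vn, va, vs⟩ := exists_add W (fun g h k => by
    rw [tr]
    simpa [hW] using hc g h k)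
  refine ⟨fun g h => ((v g h).toMul : ℂ), ⟨fun g h => Circle.norm_coe _, fun g h k => ?_⟩,
    ⟨fun g => ((μ g).toMul : ℂ), fun g => Circle.norm_coe _, fun g h => ?_⟩,
    fun g => ?_, fun g => ?_, fun g => ?_, fun g h => ?_, fun g h => ?_⟩
  · simpa using (tr _ _).1 (vc g h k)
  · simpa [hW, div_eq_mul_inv] using (tr _ _).1 (vm g h)
  · simpa using (tr _ _).1 (vr g)
  · simpa using (tr _ _).1 (vl g)
  · simpa using (tr _ _).1 (vn g)
  · simpa using (tr _ _).1 (va g h)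
  · exact (tr _ _).1 (vs g h)
end

section
/- Let G be a finite abelian group, and let ε : G×G → {1,−1}, η : G → ℂ, A : G×G×G → ℂ satisfy equations (1), (2) and (8) of the polynomial equations. Then for all g,h,k ∈ G: A_g(h,k) = A_{g+h+k}(h,k)·ε_h(g+k)·ε_k(g+h)·ε_{h+k}(g)·η_{g+h}·conj(η_{g+k}). -/
open scoped BigOperators

/-- `d = (n + √(n²+4))/2` where `n` is the cardinality of `G`. -/
noncomputable def dR (G : Type) [Fintype G] : ℝ :=
  ((Fintype.card G : ℝ) + Real.sqrt ((Fintype.card G : ℝ) ^ 2 + 4)) / 2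

/-- The complex number `d`. -/
noncomputable def dC (G : Type) [Fintype G] : ℂ := ((dR G : ℝ) : ℂ)

/-- If `(ε, η, A)` satisfies equations (1), (2) and (8) of the polynomial equations,
then `A_g(h,k) = A_{g+h+k}(h,k)·ε_h(g+k)·ε_k(g+h)·ε_{h+k}(g)·η_{g+h}·conj(η_{g+k})`. -/
theorem A_shift_by_h_add_k
    {G : Type} [AddCommGroup G] [Fintype G]
    (ε : G → G → ℂ) (η : G → ℂ) (A : G → G → G → ℂ)
    (heps : ∀ h g : G, ε h g = 1 ∨ ε h g = -1)
    (h1 : ∀ g h k : G, ε (h + k) g = ε h g * ε k (g + h + h))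
    (h1' : ∀ h : G, ε h 0 = 1)
    (h2 : ∀ g h : G, η (g + h + h) = η g)
    (h2' : ∀ g : G, η g ^ 3 = 1)
    (h8a : ∀ g h k : G,
      A g h k = η g * η (g + k) * (starRingEnd ℂ) (η (g + h)) *
        (starRingEnd ℂ) (η (g + h + k)) * ε h g * ε h (g + k) * A (g + h) h k)
    (h8b : ∀ g h k : G,
      A g h k = (starRingEnd ℂ) (η g) * (starRingEnd ℂ) (η (g + h)) * η (g + k) *
        η (g + h + k) * ε k g * ε k (g + h) * A (g + k) h k) :
    ∀ g h k : G,
      A g h k = A (g + h + k) h k * ε h (g + k) * ε k (g + h) * ε (h + k) g *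
        η (g + h) * (starRingEnd ℂ) (η (g + k)) := by
  intro g h k
  have hc : ∀ x, (starRingEnd ℂ) (η x) = η x ^ 2 := by
    intro x
    have hn : ‖η x‖ = 1 := Complex.norm_eq_one_of_pow_eq_one (h2' x) (by norm_num)
    have hm : η x * (starRingEnd ℂ) (η x) = 1 := by
      rw [Complex.mul_conj, Complex.normSq_eq_norm_sq, hn]; norm_num
    linear_combination η x ^ 2 * hm - (starRingEnd ℂ) (η x) * h2' x
  have e1 : η (g + h + h + k) = η (g + k) := by
    rw [← h2 (g + k) h]; congr 1; abel
  rw [h8a g h k, h8b (g + h) h k, h1 g h k, e1, h2 g h]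
  simp only [hc]
  have a := h2' g
  have b := h2' (g + k)
  have c := h2' (g + h)
  have e := h2' (g + h + k)
  generalize η g = x at *
  generalize η (g + k) = y at *
  generalize η (g + h) = z at *
  generalize η (g + h + k) = w at *
  have key : x * y * z ^ 2 * w ^ 2 * (z ^ 2 * x ^ 2 * w * y) = z * y ^ 2 := by
    calc _ = x ^ 3 * w ^ 3 * z ^ 3 * (z * y ^ 2) := by ring
      _ = _ := by rw [a, e, c]; ring
  linear_combination (ε h g * ε h (g + k) * ε k (g + h) * ε k (g + h + h) * A (g + h + k) h k) * key
end

section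
/- Let G be a finite abelian group of order n with d = (n+√(n²+4))/2, and let (ε,η,A) satisfy equations (1)–(8) of the polynomial equations. Then for all g,p,q,x ∈ G: Σ_{l∈G} A_{g−p+x}(−x,l+p)·A_{g−q}(x,l+q) = δ_{p−q+x,0}·conj(η_{g+q})·ε_x(g−p−x) − (δ_{x,0}/d)·η_{g+p}·η_{g+q}. -/
open scoped BigOperators
open Complex

/-- Equation (9) of the polynomial equations, at fixed parameters `g p q x y`. -/
def Eq9At {G : Type} [AddCommGroup G] [Fintype G] [DecidableEq G]
    (ε : G → G → ℂ) (η : G → ℂ) (A : G → G → G → ℂ) (g p q x y : G) : Prop :=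
  ∑ l : G, A g (x + y) l * A (g - p + x) (-x) (l + p) * A (g - q + x + y) (-y) (l + q)
    = η g * η (g + q + x) * η (g + p + q + y) *
        (starRingEnd ℂ) (η (g + p)) * (starRingEnd ℂ) (η (g + x + y)) *
        (starRingEnd ℂ) (η (g + q + x + y)) *
        ε p (g - p + x) * ε (p + x) (g - p + q + y) *
        ε q (g - q + x + y) * ε (q + y) (g - q + x) *
        A g (p + x) (q + x + y) * A (g - p) (q + y) (p + x + y)
      - (if x = (0 : G) then (1 : ℂ) else 0) * (if y = (0 : G) then (1 : ℂ) else 0) *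
        η g * η (g + p) * η (g + q) / dC G

/-- Equations (1)–(8) of the polynomial equations for `(ε, η, A)` on a finite abelian
group `G` (with `ε` taking values in `{1, −1}`). -/
structure PolyEqs1to8 {G : Type} [AddCommGroup G] [Fintype G] [DecidableEq G]
    (ε : G → G → ℂ) (η : G → ℂ) (A : G → G → G → ℂ) : Prop where
  eps_pm : ∀ h g : G, ε h g = 1 ∨ ε h g = -1
  eq1 : ∀ g h k : G, ε (h + k) g = ε h g * ε k (g + h + h)
  eq1' : ∀ h : G, ε h 0 = 1
  eq2 : ∀ g h : G, η (g + h + h) = η g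
  eq2' : ∀ g : G, η g ^ 3 = 1
  eq3 : ∀ g : G, ∑ h : G, A g h 0 = -(starRingEnd ℂ) (η g) / dC G
  eq4 : ∀ g g' k : G,
    ∑ h : G, A g (h - g) k * (starRingEnd ℂ) (A g' (h - g') k)
      = (if g = g' then (1 : ℂ) else 0)
        - (if k = (0 : G) then (1 : ℂ) else 0) * (starRingEnd ℂ) (η g) * η g' / dC G
  eq5 : ∀ g h p q : G,
    A (g + h + h) p q = ε h g * ε h (g + p) * ε h (g + q) * ε h (g + p + q) * A g p q
  eq6 : ∀ g h k : G, A g k h = (starRingEnd ℂ) (A g h k)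
  eq7a : ∀ g h k : G,
    A g h k = η g * ε (-k) (g + h) * ε (-k) (g + k) * ε (-k) (g + h + k) * A g (-k) (h - k)
  eq7b : ∀ g h k : G,
    A g h k = (starRingEnd ℂ) (η g) * ε (-h) (g + h) * ε (-h) (g + k) * ε (-h) (g + h + k) *
      A g (k - h) (-h)
  eq8a : ∀ g h k : G,
    A g h k = η g * η (g + k) * (starRingEnd ℂ) (η (g + h)) * (starRingEnd ℂ) (η (g + h + k)) *
      ε h g * ε h (g + k) * A (g + h) h k
  eq8b : ∀ g h k : G,
    A g h k = (starRingEnd ℂ) (η g) * (starRingEnd ℂ) (η (g + h)) * η (g + k) * η (g + h + k) *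
      ε k g * ε k (g + h) * A (g + k) h k


/-- Lemma (O3): for a triple satisfying equations (1)–(8) of the polynomial equations,
`Σ_l A_{g−p+x}(−x,l+p)·A_{g−q}(x,l+q) = δ_{p−q+x,0}·conj(η_{g+q})·ε_x(g−p−x) − (δ_{x,0}/d)·η_{g+p}·η_{g+q}`. -/
theorem sum_AA_eq
    {G : Type} [AddCommGroup G] [Fintype G] [DecidableEq G]
    (ε : G → G → ℂ) (η : G → ℂ) (A : G → G → G → ℂ)
    (hsol : PolyEqs1to8 ε η A) :
    ∀ g p q x : G,
      ∑ l : G, A (g - p + x) (-x) (l + p) * A (g - q) x (l + q)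
        = (if p - q + x = (0 : G) then (1 : ℂ) else 0) * (starRingEnd ℂ) (η (g + q)) *
            ε x (g - p - x)
          - (if x = (0 : G) then (1 : ℂ) else 0) / dC G * η (g + p) * η (g + q) := by
  intro g p q x
  have hsq : ∀ h y : G, ε h y * ε h y = 1 := by
    intro h y
    rcases hsol.eps_pm h y with e | e <;> rw [e] <;> norm_num
  have he0 : ∀ y : G, ε 0 y = 1 := by
    intro y
    have h := hsol.eq1 y 0 0
    simp only [add_zero] at h
    rw [h, hsq]
  have hper : ∀ u v : G, η (u - v) = η (u + v) := by
    intro u v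
    have h := hsol.eq2 (u - v) v
    rw [← h]; congr 1; abel
  have hconj : ∀ y : G, (starRingEnd ℂ) (η y) * (starRingEnd ℂ) (η y) = η y := by
    intro y
    have h3 := hsol.eq2' y
    have hn : ‖η y‖ = 1 := by
      have h : ‖η y‖ ^ 3 = 1 := by rw [← norm_pow, h3, norm_one]
      exact (pow_eq_one_iff_of_nonneg (norm_nonneg _) (by norm_num)).1 h
    have h1 : (starRingEnd ℂ) (η y) * η y = 1 := by
      rw [mul_comm, Complex.mul_conj, Complex.normSq_eq_norm_sq, hn]; norm_num
    linear_combination (-(starRingEnd ℂ) (η y) ^ 2) * h3 +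
      (η y * ((starRingEnd ℂ) (η y) * η y + 1)) * h1
  have hA : ∀ l : G, A (g - p + x) (-x) (l + p) =
      (starRingEnd ℂ) (η (g - p + x)) * ε x (g - p - x) * A (g - p - x) (l + p + x) x := by
    intro l
    have h7 := hsol.eq7b (g - p + x) (-x) (l + p)
    have h5 := hsol.eq5 (g - p - x) x (l + p + x) x
    rw [show g - p + x + -x = g - p by abel, show g - p + x + (l + p) = g + l + x by abel,
      neg_neg,
      show g - p + (l + p) = g + l by abel,
      show l + p - -x = l + p + x by abel] at h7
    rw [show g - p - x + x + x = g - p + x by abel,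
      show g - p - x + (l + p + x) = g + l by abel,
      show g - p - x + x = g - p by abel] at h5
    rw [h7, h5]
    have e1 := hsq x (g - p)
    have e2 := hsq x (g + l + x)
    have e3 := hsq x (g + l)
    generalize ε x (g - p) = a at *
    generalize ε x (g + l + x) = b at *
    generalize ε x (g + l) = c at *
    generalize (starRingEnd ℂ) (η (g - p + x)) = z
    generalize ε x (g - p - x) = w
    generalize A (g - p - x) (l + p + x) x = t
    calc _ = z * w * t * (a * a) * (b * b) * (c * c) := by ring
      _ = _ := by rw [e1, e2, e3]; ring
  have h4 := hsol.eq4 (g - p - x) (g - q) x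
  rw [← Equiv.sum_comp (Equiv.addRight g)] at h4
  have hS : ∑ l : G, A (g - p + x) (-x) (l + p) * A (g - q) x (l + q) =
      (starRingEnd ℂ) (η (g - p + x)) * ε x (g - p - x) *
      ∑ l : G, A (g - p - x) (Equiv.addRight g l - (g - p - x)) x *
        (starRingEnd ℂ) (A (g - q) (Equiv.addRight g l - (g - q)) x) := by
    rw [Finset.mul_sum]
    refine Finset.sum_congr rfl fun l _ => ?_
    rw [hA l, ← hsol.eq6, Equiv.coe_addRight,
      show l + g - (g - p - x) = l + p + x by abel, show l + g - (g - q) = l + q by abel]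
    ring
  rw [hS, h4]
  have hiff : (g - p - x = g - q) ↔ (p - q + x = 0) := by
    constructor
    · intro h
      have : p - q + x = (g - q) - (g - p - x) := by abel
      rw [this, h, sub_self]
    · intro h
      have : g - p - x = (g - q) - (p - q + x) := by abel
      rw [this, h, sub_zero]
  have hT1 : (if g - p - x = g - q then (1 : ℂ) else 0) * (starRingEnd ℂ) (η (g - p + x)) =
      (if p - q + x = 0 then (1 : ℂ) else 0) * (starRingEnd ℂ) (η (g + q)) := by
    by_cases h : p - q + x = 0
    · rw [if_pos h, if_pos (hiff.2 h), ← hper g q, ← hiff.2 h, ← hper (g - p) x]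
    · rw [if_neg h, if_neg (fun h' => h (hiff.1 h'))]; ring
  have hT2 : (if x = 0 then (1 : ℂ) else 0) * (starRingEnd ℂ) (η (g - p + x)) *
      ε x (g - p - x) * (starRingEnd ℂ) (η (g - p - x)) =
      (if x = 0 then (1 : ℂ) else 0) * η (g + p) := by
    by_cases h : x = 0
    · subst h
      rw [add_zero, sub_zero, he0, if_pos rfl, ← hper g p, one_mul, mul_one, one_mul, hconj]
    · rw [if_neg h]; ring
  rw [← hper g q] at hT1 ⊢
  linear_combination ε x (g - p - x) * hT1 - η (g - q) / dC G * hT2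
end

section
/- Let G be a finite abelian group of order n with d = (n+√(n²+4))/2, and let (ε,η,A) satisfy equations (1)–(8) of the polynomial equations together with A_g(h,0) = δ_{h,0} − 1/(d−1) for all g,h ∈ G. Then for all g,p,q,x ∈ G, the instance of equation (9) with y = −x holds if and only if A_g(−x,p)·A_g(x,q)·ε_x(g−x)·ε_x(g+p−x) − A_g(p+x,q)·A_g(q−x,p)·ε_x(g+q−x)·ε_x(g+p+q−x) = δ_{p−q+x,0}·ε_x(g+p)/(d−1) − δ_{x,0}/(d−1). -/
open scoped BigOperators
open Complex

theorem aux_dR_sq (G : Type) [Fintype G] : dR G ^ 2 = (Fintype.card G : ℝ) * dR G + 1 := by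
  unfold dR
  have h := Real.sq_sqrt (show (0:ℝ) ≤ (Fintype.card G : ℝ) ^ 2 + 4 by positivity)
  nlinarith

theorem aux_dR_gt (G : Type) [Fintype G] [Nonempty G] : 1 < dR G := by
  unfold dR
  have h1 : (1:ℝ) ≤ Fintype.card G := by exact_mod_cast Fintype.card_pos
  have h2 : (2:ℝ) ≤ Real.sqrt ((Fintype.card G : ℝ) ^ 2 + 4) := by
    apply Real.le_sqrt_of_sq_le
    nlinarith
  linarith

theorem aux_final {a b e S T₁ T₂ D X d : ℂ} (hd : d ≠ 0) (hd1 : d - 1 ≠ 0) (hS : S ^ 2 = 1)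
    (h1 : D * (S * e) = D * a) (h2 : X * S = X) (h3 : X * e = X) (hb : b = e * (D - X / d)) :
    (S * T₁ - 1 / (d - 1) * b = S * T₂ - X / d) ↔ (T₁ - T₂ = D * a / (d - 1) - X / (d - 1)) := by
  subst hb
  have key : S * (S * T₁ - 1 / (d - 1) * (e * (D - X / d)) - (S * T₂ - X / d))
      = T₁ - T₂ - (D * a / (d - 1) - X / (d - 1)) := by
    rw [← h1]
    field_simp
    have h4 : S * (X * e) = X := by rw [h3, mul_comm, h2]
    linear_combination (d - 1) * d * (T₁ - T₂) * hS + h4 + (d - 1) * h2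
  have hS0 : S ≠ 0 := by
    rintro rfl
    norm_num at hS
  rw [← sub_eq_zero, ← sub_eq_zero (a := T₁ - T₂), ← key]
  simp [hS0]

/-- Under equations (1)–(8) and the `Q`-system condition `A_g(h,0) = δ_{h,0} − 1/(d−1)`,
the instance of equation (9) with `y = −x` is equivalent to the simplified relation (AA−AA). -/
theorem eq9_y_neg_x_iff
    {G : Type} [AddCommGroup G] [Fintype G] [DecidableEq G]
    (ε : G → G → ℂ) (η : G → ℂ) (A : G → G → G → ℂ)
    (hsol : PolyEqs1to8 ε η A)
    (hQ : ∀ g h : G, A g h 0 = (if h = (0 : G) then (1 : ℂ) else 0) - 1 / (dC G - 1)) :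
    ∀ g p q x : G,
      Eq9At ε η A g p q x (-x) ↔
        A g (-x) p * A g x q * ε x (g - x) * ε x (g + p - x)
          - A g (p + x) q * A g (q - x) p * ε x (g + q - x) * ε x (g + p + q - x)
        = (if p - q + x = (0 : G) then (1 : ℂ) else 0) * ε x (g + p) / (dC G - 1)
          - (if x = (0 : G) then (1 : ℂ) else 0) / (dC G - 1) := by
  have hd1R := aux_dR_gt G
  have hdsqR := aux_dR_sq G
  have hd : dC G ≠ 0 := by
    unfold dC
    exact_mod_cast (by linarith : dR G > 0).ne'
  have hd1 : dC G - 1 ≠ 0 := by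
    unfold dC
    exact_mod_cast (by linarith : dR G - 1 > 0).ne'
  have hdsq : dC G ^ 2 = (Fintype.card G : ℂ) * dC G + 1 := by
    unfold dC
    exact_mod_cast hdsqR
  have hcd : (starRingEnd ℂ) (dC G) = dC G := by
    unfold dC
    exact Complex.conj_ofReal _
  obtain ⟨eps_pm, eq1, -, -, -, eq3, eq4, eq5, eq6, -, eq7b, eq8a, eq8b⟩ := hsol
  have hη : ∀ g, η g = 1 := by
    intro g
    have h := eq3 g
    simp only [hQ, Finset.sum_sub_distrib, Finset.sum_ite_eq', Finset.mem_univ, if_true,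
      Finset.sum_const, Finset.card_univ, nsmul_eq_mul] at h
    have h' : (starRingEnd ℂ) (η g) = 1 := by
      field_simp at h
      have : (dC G - 1) * ((starRingEnd ℂ) (η g) - 1) = 0 := by
        linear_combination h - hdsq
      rcases mul_eq_zero.mp this with h0 | h0
      · exact absurd h0 hd1
      · exact sub_eq_zero.mp h0
    have := congrArg (starRingEnd ℂ) h'
    simpa using this
  have hA0 : ∀ g l : G, A g 0 l = (if l = (0 : G) then (1 : ℂ) else 0) - 1 / (dC G - 1) := by
    intro g l
    rw [eq6 g l 0, hQ]
    split_ifs <;> simp [hcd]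
  simp only [hη, map_one, one_mul, mul_one] at eq4 eq7b eq8a eq8b
  have sq : ∀ h g, ε h g ^ 2 = 1 := by
    intro h g
    rcases eps_pm h g with h | h <;> rw [h] <;> norm_num
  have sq' : ∀ h g, ε h g * ε h g = 1 := by
    intro h g
    rw [← pow_two, sq]
  have e0 : ∀ g, ε 0 g = 1 := by
    intro g
    have h := eq1 g 0 0
    rw [add_zero, add_zero, add_zero, sq'] at h
    exact h
  have eneg : ∀ x g, ε (-x) (g + x) = ε x (g - x) := by
    intro x g
    have h := eq1 (g - x) x (-x)
    rw [add_neg_cancel, e0, show g - x + x + x = g + x by abel] at h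
    linear_combination -ε x (g - x) * h - ε (-x) (g + x) * sq x (g - x)
  intro g p q x
  -- the sum
  have hsum : ∑ l : G, A (g - p + x) (-x) (l + p) * A (g - q) x (l + q)
      = ε x (g - p - x) * ((if p - q + x = (0 : G) then (1 : ℂ) else 0)
        - (if x = (0 : G) then (1 : ℂ) else 0) / dC G) := by
    have h4 := eq4 (g - p - x) (g - q) x
    have hiff : (g - p - x = g - q) ↔ (p - q + x = 0) := by
      rw [← sub_eq_zero, show g - p - x - (g - q) = -(p - q + x) by abel, neg_eq_zero]
    simp only [hiff] at h4
    rw [← h4, Finset.mul_sum, ← Equiv.sum_comp (Equiv.addRight g)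
      (fun h => ε x (g - p - x) * (A (g - p - x) (h - (g - p - x)) x *
        (starRingEnd ℂ) (A (g - q) (h - (g - q)) x)))]
    refine Finset.sum_congr rfl fun l _ => ?_
    simp only [Equiv.coe_addRight]
    rw [← eq6, show l + g - (g - q) = l + q by abel, show l + g - (g - p - x) = l + p + x by abel]
    rw [eq7b (g - p + x) (-x) (l + p), neg_neg, sub_neg_eq_add]
    have h5 := eq5 (g - p - x) x (l + p + x) x
    rw [show g - p - x + x + x = g - p + x by abel,
      show g - p - x + (l + p + x) = g + l by abel,
      show g - p - x + x = g - p by abel,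
      show g + l + x = g + l + x by abel] at h5
    rw [h5, show g - p + x + -x = g - p by abel, show g - p + x + (l + p) = g + l + x by abel,
      show g - p + (l + p) = g + l by abel]
    have s1 := sq x (g - p)
    have s2 := sq x (g + l + x)
    have s3 := sq x (g + l)
    calc _ = ε x (g - p) ^ 2 * ε x (g + l + x) ^ 2 * ε x (g + l) ^ 2 * (ε x (g - p - x) *
          A (g - p - x) (l + p + x) x * A (g - q) x (l + q)) := by ring
      _ = _ := by rw [s1, s2, s3]; ring
  -- left side
  have hL : ∑ l : G, A g 0 l * A (g - p + x) (-x) (l + p) * A (g - q) x (l + q)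
      = A (g - p + x) (-x) p * A (g - q) x q - 1 / (dC G - 1) *
        ∑ l : G, A (g - p + x) (-x) (l + p) * A (g - q) x (l + q) := by
    simp only [hA0, sub_mul, Finset.sum_sub_distrib, Finset.mul_sum, mul_assoc]
    simp
  have hT1 : A (g - p + x) (-x) p * A (g - q) x q
      = (ε p (g - p + x) * ε p (g - p) * ε q (g - q) * ε q (g - q + x)) *
        (A g (-x) p * A g x q * ε x (g - x) * ε x (g + p - x)) := by
    have a1 := eq8b (g - p + x) (-x) p
    have a2 := eq8a (g + x) (-x) p
    have a3 := eq8b (g - q) x q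
    rw [show g - p + x + -x = g - p by abel, show g - p + x + p = g + x by abel] at a1
    rw [show g + x + -x = g by abel, show g + x + p = g + p + x by abel, eneg, eneg] at a2
    rw [show g - q + q = g by abel] at a3
    rw [a1, a2, a3]
    ring
  have hT2 : ε p (g - p + x) * ε (p + x) (g - p + q + -x) *
        ε q (g - q) * ε (q + -x) (g - q + x) * A g (p + x) q * A (g - p) (q + -x) p
      = (ε p (g - p + x) * ε p (g - p) * ε q (g - q) * ε q (g - q + x)) *
        (A g (p + x) q * A g (q - x) p * ε x (g + q - x) * ε x (g + p + q - x)) := by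
    have a1 := eq8b (g - p) (q + -x) p
    have a2 := eq1 (g - p + q + -x) p x
    have a3 := eq1 (g - q + x) q (-x)
    rw [show g - p + (q + -x) = g - p + q + -x by abel, sub_add_cancel] at a1
    rw [show g - p + q + -x + p + p = g + p + q - x by abel] at a2
    rw [show g - q + x + q + q = g + q + x by abel, eneg] at a3
    have s := sq p (g - p + q + -x)
    rw [a1, a2, a3, ← sub_eq_add_neg q x]
    linear_combination (ε p (g - p + x) * ε p (g - p) * ε q (g - q) * ε q (g - q + x)) *
        (A g (p + x) q * A g (q - x) p * ε x (g + q - x) * ε x (g + p + q - x)) * s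
  unfold Eq9At
  simp only [hη, map_one, one_mul, mul_one, neg_neg, neg_eq_zero, add_neg_cancel_right,
    add_neg_cancel]
  rw [hL, hT1, hT2]
  have hX : (if x = (0 : G) then (1 : ℂ) else 0) * (if x = (0 : G) then (1 : ℂ) else 0)
      = if x = (0 : G) then (1 : ℂ) else 0 := by split_ifs <;> simp
  rw [hX]
  refine aux_final hd hd1 ?_ ?_ ?_ ?_ hsum
  · simp only [mul_pow, sq, mul_one]
  · split_ifs with h
    · have hq : q = p + x := by
        rw [← sub_eq_zero, ← neg_eq_zero, ← h]
        abel
      subst hq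
      have a1 := eq1 (g - p) p x
      have a2 := eq1 (g - p - x) x p
      rw [show g - p + p + p = g + p by abel] at a1
      rw [show g - p - x + x + x = g - p + x by abel, add_comm x p] at a2
      rw [show g - (p + x) = g - p - x by abel, show g - p - x + x = g - p by abel, a1, a2]
      have s1 := sq p (g - p + x)
      have s2 := sq p (g - p)
      have s3 := sq x (g - p - x)
      calc _ = ε p (g - p + x) ^ 2 * ε p (g - p) ^ 2 * ε x (g - p - x) ^ 2 * ε x (g + p) := by ring
        _ = _ := by rw [s1, s2, s3]; ring
    · simp
  · split_ifs with h
    · subst h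
      simp only [add_zero, sq', one_mul]
    · simp
  · split_ifs with h
    · subst h
      rw [e0, one_mul]
    · simp
end

section
/- Let G be a finite abelian group of order n with d = (n+√(n²+4))/2, and let (ε,η,A) satisfy equations (1)–(8) of the polynomial equations together with A_g(h,0) = δ_{h,0} − 1/(d−1) for all g,h ∈ G. Then for all g,p,q ∈ G, the instance of equation (9) with x = y = 0 holds if and only if |A_g(p,q)|² = δ_{p,0}·δ_{q,0} − (δ_{p,0} + δ_{q,0} + δ_{p,q})/(d−1) + d/(d−1)². -/
open scoped BigOperators
open Complex

/-- Under equations (1)–(8) and the `Q`-system condition `A_g(h,0) = δ_{h,0} − 1/(d−1)`,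
the instance of equation (9) with `x = y = 0` is equivalent to
`|A_g(p,q)|² = δ_{p,0}·δ_{q,0} − (δ_{p,0}+δ_{q,0}+δ_{p,q})/(d−1) + d/(d−1)²`. -/
theorem eq9_x_y_zero_iff
    {G : Type} [AddCommGroup G] [Fintype G] [DecidableEq G]
    (ε : G → G → ℂ) (η : G → ℂ) (A : G → G → G → ℂ)
    (hsol : PolyEqs1to8 ε η A)
    (hQ : ∀ g h : G, A g h 0 = (if h = (0 : G) then (1 : ℂ) else 0) - 1 / (dC G - 1)) :
    ∀ g p q : G,
      Eq9At ε η A g p q 0 0 ↔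
        (‖A g p q‖ : ℝ) ^ 2
          = (if p = (0 : G) then (1 : ℝ) else 0) * (if q = (0 : G) then (1 : ℝ) else 0)
            - ((if p = (0 : G) then (1 : ℝ) else 0) + (if q = (0 : G) then (1 : ℝ) else 0)
                + (if p = q then (1 : ℝ) else 0)) / (dR G - 1)
            + dR G / (dR G - 1) ^ 2 := by
  have hn : (1 : ℝ) ≤ (Fintype.card G : ℝ) := by
    exact_mod_cast (Fintype.card_pos_iff.mpr ⟨(0 : G)⟩)
  have hs : Real.sqrt ((Fintype.card G : ℝ) ^ 2 + 4) ^ 2 = (Fintype.card G : ℝ) ^ 2 + 4 :=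
    Real.sq_sqrt (by positivity)
  have hs1 : 1 < Real.sqrt ((Fintype.card G : ℝ) ^ 2 + 4) := by
    rw [Real.lt_sqrt (by norm_num)]
    nlinarith
  have hd1 : 1 < dR G := by
    unfold dR
    linarith
  have hd2 : (dR G) ^ 2 = (Fintype.card G : ℝ) * dR G + 1 := by
    unfold dR
    nlinarith
  have hdc1 : dC G - 1 ≠ 0 := by
    unfold dC
    have : dR G - 1 ≠ 0 := by linarith
    exact_mod_cast this
  have hdc0 : dC G ≠ 0 := by
    unfold dC
    have : dR G ≠ 0 := by linarith
    exact_mod_cast this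
  have hdc2 : (dC G) ^ 2 = (Fintype.card G : ℂ) * dC G + 1 := by
    unfold dC
    exact_mod_cast hd2
  have hη : ∀ g, η g = 1 := by
    intro g
    have h3 := hsol.eq3 g
    simp only [hQ, Finset.sum_sub_distrib, Finset.sum_ite_eq', Finset.mem_univ, if_true,
      Finset.sum_const, Finset.card_univ, nsmul_eq_mul] at h3
    have h4 : (starRingEnd ℂ) (η g) = 1 := by
      field_simp at h3
      have h5 : (dC G - 1) * ((starRingEnd ℂ) (η g) - 1) = 0 := by
        linear_combination h3 - hdc2
      rcases mul_eq_zero.mp h5 with h | h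
      · exact absurd h hdc1
      · exact sub_eq_zero.mp h
    have := congrArg (starRingEnd ℂ) h4
    simpa using this
  have hQ' : ∀ g h : G, A g 0 h = (if h = (0 : G) then (1 : ℂ) else 0) - 1 / (dC G - 1) := by
    intro g h
    rw [hsol.eq6 g h 0, hQ]
    unfold dC
    split_ifs <;> simp
  have hεc : ∀ h g, (starRingEnd ℂ) (ε h g) = ε h g := by
    intro h g
    rcases hsol.eps_pm h g with h | h <;> simp [h]
  have hεs : ∀ h g, ε h g * ε h g = 1 := by
    intro h g
    rcases hsol.eps_pm h g with h | h <;> simp [h]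
  intro g p q
  have hA : A (g - p) q p = ε p (g - p) * ε p (g - p + q) * (starRingEnd ℂ) (A g p q) := by
    rw [hsol.eq6 (g - p) p q, hsol.eq8a (g - p) p q]
    simp [hη, hεc]
  have key : ∀ c : ℂ, ∑ l : G, ((if l = 0 then (1 : ℂ) else 0) - c) *
      ((if l + p = 0 then (1 : ℂ) else 0) - c) * ((if l + q = 0 then (1 : ℂ) else 0) - c)
      = (if p = 0 then (1 : ℂ) else 0) * (if q = 0 then (1 : ℂ) else 0)
        - c * ((if p = 0 then (1 : ℂ) else 0) + (if q = 0 then (1 : ℂ) else 0)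
          + (if p = q then (1 : ℂ) else 0)) + 3 * c ^ 2 - (Fintype.card G : ℂ) * c ^ 3 := by
    intro c
    have e1 : ∀ F : G → ℂ, ∑ l : G, (if l = 0 then (1 : ℂ) else 0) * F l = F 0 := by
      intro F; simp
    have e2 : ∀ (r : G) (F : G → ℂ),
        ∑ l : G, (if l + r = 0 then (1 : ℂ) else 0) * F l = F (-r) := by
      intro r F; simp [add_eq_zero_iff_eq_neg]
    have e3 : ∀ l : G, ((if l = 0 then (1 : ℂ) else 0) - c) *
      ((if l + p = 0 then (1 : ℂ) else 0) - c) * ((if l + q = 0 then (1 : ℂ) else 0) - c)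
      = (if l = 0 then (1 : ℂ) else 0) * (((if l + p = 0 then (1 : ℂ) else 0) - c) *
          ((if l + q = 0 then (1 : ℂ) else 0) - c))
        + (if l + p = 0 then (1 : ℂ) else 0) * (-c * ((if l + q = 0 then (1 : ℂ) else 0) - c))
        + (if l + q = 0 then (1 : ℂ) else 0) * (c ^ 2) - c ^ 3 := by
      intro l; ring
    have e4 : (-p + q = 0) ↔ (p = q) := by
      rw [neg_add_eq_zero]
    rw [Finset.sum_congr rfl (fun l _ => e3 l), Finset.sum_sub_distrib, Finset.sum_add_distrib,
      Finset.sum_add_distrib, e1, e2, e2]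
    simp only [zero_add, e4, Finset.sum_const, Finset.card_univ, nsmul_eq_mul]
    ring
  have hR : (if p = (0 : G) then (1 : ℂ) else 0) * (if q = (0 : G) then (1 : ℂ) else 0)
        - 1 / (dC G - 1) * ((if p = 0 then (1 : ℂ) else 0) + (if q = 0 then (1 : ℂ) else 0)
          + (if p = q then (1 : ℂ) else 0)) + 3 * (1 / (dC G - 1)) ^ 2
          - (Fintype.card G : ℂ) * (1 / (dC G - 1)) ^ 3
      = (if p = (0 : G) then (1 : ℂ) else 0) * (if q = (0 : G) then (1 : ℂ) else 0)
        - ((if p = 0 then (1 : ℂ) else 0) + (if q = 0 then (1 : ℂ) else 0)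
          + (if p = q then (1 : ℂ) else 0)) / (dC G - 1) + dC G / (dC G - 1) ^ 2 - 1 / dC G := by
    have hc : (Fintype.card G : ℂ) = (dC G ^ 2 - 1) / dC G := by
      field_simp
      linear_combination -hdc2
    rw [hc]
    field_simp
    ring
  have hN : A g p q * (starRingEnd ℂ) (A g p q) = ((‖A g p q‖ ^ 2 : ℝ) : ℂ) := by
    rw [Complex.mul_conj, Complex.normSq_eq_norm_sq]
  unfold Eq9At
  simp only [add_zero, neg_zero, hQ']
  rw [key, hR]
  simp only [hη, map_one, if_true, hA, mul_one, one_mul]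
  have hR2 : ε p (g - p) * ε p (g - p + q) * ε q (g - q) * ε q (g - q) * A g p q *
      (ε p (g - p) * ε p (g - p + q) * (starRingEnd ℂ) (A g p q)) = ((‖A g p q‖ ^ 2 : ℝ) : ℂ) := by
    rw [← hN]
    have a1 := hεs p (g - p)
    have a2 := hεs p (g - p + q)
    have a3 := hεs q (g - q)
    calc _ = (ε p (g - p) * ε p (g - p)) * (ε p (g - p + q) * ε p (g - p + q)) *
          (ε q (g - q) * ε q (g - q)) * (A g p q * (starRingEnd ℂ) (A g p q)) := by ring
      _ = _ := by rw [a1, a2, a3]; ring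
  rw [hR2, sub_left_inj, eq_comm, ← Complex.ofReal_inj]
  unfold dC
  push_cast
  have hite : ∀ (P : Prop) [Decidable P],
      (((if P then (1 : ℝ) else 0) : ℝ) : ℂ) = if P then (1 : ℂ) else 0 := by
    intro P _
    split_ifs <;> simp
  rw [hite, hite, hite]
end

section
/- Let G be a finite abelian group of order n with d = (n+√(n²+4))/2, and let (ε,η,A) be a solution of the polynomial equations for G satisfying in addition A_0(h,0) = δ_{h,0} − 1/(d−1) for all h ∈ G. Then for all h,k ∈ G: |A_0(h,k)|² = δ_{h,0}·δ_{k,0} − (δ_{h,0} + δ_{k,0} + δ_{h,k})/(d−1) + d/(d−1)². -/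
open scoped BigOperators
open Complex

/-- A solution of the polynomial equations (1)–(9) for a finite abelian group `G`. -/
structure PolySolution {G : Type} [AddCommGroup G] [Fintype G] [DecidableEq G]
    (ε : G → G → ℂ) (η : G → ℂ) (A : G → G → G → ℂ)
    extends PolyEqs1to8 ε η A : Prop where
  eq9 : ∀ g p q x y : G, Eq9At ε η A g p q x y

/-- For a solution of the polynomial equations satisfying `A_0(h,0) = δ_{h,0} − 1/(d−1)`,
one has `|A_0(h,k)|² = δ_{h,0}·δ_{k,0} − (δ_{h,0}+δ_{k,0}+δ_{h,k})/(d−1) + d/(d−1)²`. -/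
theorem abs_A_zero_sq_of_Qsystem
    {G : Type} [AddCommGroup G] [Fintype G] [DecidableEq G]
    (ε : G → G → ℂ) (η : G → ℂ) (A : G → G → G → ℂ)
    (hsol : PolySolution ε η A)
    (hQ : ∀ h : G, A 0 h 0 = (if h = (0 : G) then (1 : ℂ) else 0) - 1 / (dC G - 1)) :
    ∀ h k : G,
      (‖A 0 h k‖ : ℝ) ^ 2
        = (if h = (0 : G) then (1 : ℝ) else 0) * (if k = (0 : G) then (1 : ℝ) else 0)
          - ((if h = (0 : G) then (1 : ℝ) else 0) + (if k = (0 : G) then (1 : ℝ) else 0)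
              + (if h = k then (1 : ℝ) else 0)) / (dR G - 1)
          + dR G / (dR G - 1) ^ 2 := by
  have hS := hsol.toPolyEqs1to8
  -- numerics
  have hd1 : 1 < dR G := by
    have hn : (1 : ℝ) ≤ Fintype.card G := by
      exact_mod_cast Fintype.card_pos_iff.mpr ⟨(0 : G)⟩
    have hs : (2 : ℝ) ≤ Real.sqrt ((Fintype.card G : ℝ) ^ 2 + 4) := by
      apply Real.le_sqrt_of_sq_le
      nlinarith
    unfold dR
    linarith
  have hdn : dR G ^ 2 = Fintype.card G * dR G + 1 := by
    have hs : Real.sqrt ((Fintype.card G : ℝ) ^ 2 + 4) ^ 2 = (Fintype.card G : ℝ) ^ 2 + 4 :=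
      Real.sq_sqrt (by positivity)
    unfold dR
    nlinarith
  have hD0 : dC G ≠ 0 := by
    unfold dC
    exact_mod_cast (by linarith : dR G ≠ 0)
  have hD1 : dC G - 1 ≠ 0 := by
    unfold dC
    have : dR G - 1 ≠ 0 := by linarith
    exact_mod_cast this
  have hDn : dC G ^ 2 = Fintype.card G * dC G + 1 := by
    unfold dC
    exact_mod_cast hdn
  -- eta
  have hc : ∀ g, (starRingEnd ℂ) (η g) = η g ^ 2 := by
    intro g
    have h3 := hS.eq2' g
    have hn : ‖η g‖ = 1 := by
      have : ‖η g‖ ^ 3 = 1 := by rw [← norm_pow, h3, norm_one]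
      exact (pow_eq_one_iff_of_nonneg (norm_nonneg _) (by norm_num)).mp this
    have h1 : (starRingEnd ℂ) (η g) * η g = 1 := by
      rw [Complex.conj_mul', hn]; norm_num
    calc (starRingEnd ℂ) (η g) = (starRingEnd ℂ) (η g) * η g ^ 3 := by rw [h3, mul_one]
      _ = ((starRingEnd ℂ) (η g) * η g) * η g ^ 2 := by ring
      _ = η g ^ 2 := by rw [h1, one_mul]
  have hneg : ∀ p, η (-p) = η p := by
    intro p
    have := hS.eq2 (-p) p
    simpa using this.symm
  have hneg2 : ∀ p q, η (-p + q) = η (p + q) := by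
    intro p q
    have := hS.eq2 (-p + q) p
    rw [← this]
    congr 1
    abel
  have hη0 : η 0 = 1 := by
    have h3 := hS.eq3 0
    simp only [hQ, Finset.sum_sub_distrib, Finset.sum_ite_eq', Finset.mem_univ, if_true,
      Finset.sum_const, Finset.card_univ, nsmul_eq_mul] at h3
    have h4 : (starRingEnd ℂ) (η 0) = 1 := by
      field_simp at h3
      have : (starRingEnd ℂ) (η 0) * (dC G - 1) = 1 * (dC G - 1) := by
        linear_combination h3 - hDn
      exact mul_right_cancel₀ hD1 this
    have := congrArg (starRingEnd ℂ) h4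
    simpa using this
  have hε : ∀ h g, ε h g * ε h g = 1 := by
    intro h g
    rcases hS.eps_pm h g with h | h <;> rw [h] <;> norm_num
  -- reality up to eta
  have hreal : ∀ g h, A g 0 h = η g ^ 2 * A g h 0 := by
    intro g h
    have h7 := hS.eq7b g h 0
    have hr := hS.eq6 g (-h) (-h)
    have hee : (starRingEnd ℂ) (ε (-h) g) = ε (-h) g := by
      rcases hS.eps_pm (-h) g with h | h <;> rw [h] <;> simp
    simp only [add_zero, zero_sub] at h7
    have h7' : A g h 0 = η g ^ 2 * ε (-h) g * A g (-h) (-h) := by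
      rw [h7, hc]
      linear_combination (η g ^ 2 * ε (-h) g * A g (-h) (-h)) * hε (-h) (g + h)
    rw [hS.eq6 g h 0]
    have hcc : (starRingEnd ℂ) (A g h 0) = η g * ε (-h) g * A g (-h) (-h) := by
      rw [h7', map_mul, map_mul, ← hr, hee, map_pow, hc]
      linear_combination (η g * ε (-h) g * A g (-h) (-h)) * hS.eq2' g
    rw [hcc, h7']
    linear_combination (-η g * ε (-h) g * A g (-h) (-h)) * hS.eq2' g
  -- A_{-p}(0,p)
  have hdiag : ∀ p, A (-p) 0 p = η p * ((if p = 0 then (1 : ℂ) else 0) - 1 / (dC G - 1)) := by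
    intro p
    have h4 := hS.eq4 0 (-p) 0
    have h3 : ∑ h : G, A (-p) 0 (h + p) = - η p / dC G := by
      have e := congrArg (starRingEnd ℂ) (hS.eq3 (-p))
      have hcd : (starRingEnd ℂ) (dC G) = dC G := by unfold dC; exact Complex.conj_ofReal _
      rw [map_sum, map_div₀, map_neg, Complex.conj_conj, hcd, hneg] at e
      rw [← e]
      rw [← Equiv.sum_comp (Equiv.addRight p) (fun h => (starRingEnd ℂ) (A (-p) h 0))]
      refine Finset.sum_congr rfl fun h _ => ?_
      simp [← hS.eq6]
    simp only [sub_zero, sub_neg_eq_add, hQ, ← hS.eq6, sub_mul, Finset.sum_sub_distrib, ite_mul,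
      one_mul, zero_mul, Finset.sum_ite_eq', Finset.mem_univ, if_true, zero_add,
      ← Finset.mul_sum, h3, hη0, map_one, hneg] at h4
    have hp : (if (0 : G) = -p then (1 : ℂ) else 0) = (if p = 0 then (1 : ℂ) else 0) := by
      by_cases h : p = 0
      · simp [h]
      · rw [if_neg h, if_neg]
        intro h'
        exact h (neg_eq_zero.mp h'.symm)
    rw [hp] at h4
    have hδ : (if p = 0 then (1 : ℂ) else 0) * η p = (if p = 0 then (1 : ℂ) else 0) := by
      split_ifs with h
      · rw [h, hη0, one_mul]
      · simp
    have : A (-p) 0 p = (if p = 0 then (1 : ℂ) else 0) - η p / dC G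
        + 1 / (dC G - 1) * (-η p / dC G) := by
      linear_combination h4
    rw [this]
    have hi : 1 / dC G + 1 / (dC G - 1) * (1 / dC G) = 1 / (dC G - 1) := by
      field_simp
      ring
    linear_combination (-1 : ℂ) * hδ - η p * hi
  have hcross : ∀ p q, ∑ l : G, A (-p) 0 (l + p) * A (-q) 0 (l + q)
      = η p * η q * ((if p = q then (1 : ℂ) else 0) - 1 / dC G) := by
    intro p q
    have h4 := hS.eq4 (-q) (-p) 0
    simp only [sub_neg_eq_add, ← hS.eq6, if_true, hneg, hc, neg_inj] at h4
    have e : ∑ l : G, A (-p) 0 (l + p) * A (-q) 0 (l + q)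
        = η q ^ 2 * ∑ l : G, A (-q) (l + q) 0 * A (-p) 0 (l + p) := by
      rw [Finset.mul_sum]
      refine Finset.sum_congr rfl fun l _ => ?_
      rw [hreal (-q) (l + q), hneg]
      ring
    rw [e, h4]
    by_cases hpq : p = q
    · subst hpq
      simp only [if_true]
      linear_combination (-(η p ^ 2) / dC G) * hS.eq2' p
    · rw [if_neg hpq, if_neg (fun h => hpq h.symm)]
      linear_combination (-(η q * η p) / dC G) * hS.eq2' q
  intro p q
  have h9 := hsol.eq9 0 p q 0 0
  unfold Eq9At at h9
  simp only [add_zero, zero_add, neg_zero, zero_sub, if_true, one_mul, hη0, map_one, mul_one] at h9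
  have h8 := hS.eq8b (-p) q p
  simp only [neg_add_cancel, hneg, hneg2, hη0, mul_one] at h8
  have h01 : ∀ l, A 0 0 l = (if l = 0 then (1 : ℂ) else 0) - 1 / (dC G - 1) := by
    intro l
    rw [hreal, hη0, hQ]
    ring
  have hL : ∑ l : G, A 0 0 l * A (-p) 0 (l + p) * A (-q) 0 (l + q)
      = A (-p) 0 p * A (-q) 0 q - 1 / (dC G - 1) *
        ∑ l : G, A (-p) 0 (l + p) * A (-q) 0 (l + q) := by
    simp only [h01, mul_assoc, sub_mul, Finset.sum_sub_distrib, ite_mul,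
      one_mul, zero_mul, Finset.sum_ite_eq', Finset.mem_univ, if_true, zero_add,
      ← Finset.mul_sum]
  rw [hL, hdiag, hdiag, hcross] at h9
  have hA : A 0 p q * A 0 q p = ((‖A 0 p q‖ ^ 2 : ℝ) : ℂ) := by
    rw [hS.eq6 0 p q, Complex.mul_conj']
    norm_cast
  have hpq : -p + q + p = q := by abel
  rw [hpq] at h8
  rw [h8] at h9
  simp only [hc] at h9
  have e1 := hε p (-p)
  have e2 := hε p (-p + q)
  have e3 := hε q (-q)
  have f1 := hS.eq2' p
  have f2 := hS.eq2' q
  have f3 := hS.eq2' (p + q)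
  generalize ε p (-p) = a at *
  generalize ε p (-p + q) = b at *
  generalize ε q (-q) = c at *
  generalize η (p + q) = r at *
  have hne : η p * η q ≠ 0 := by
    intro h0
    have : (η p * η q) ^ 3 = 1 := by rw [mul_pow, f1, f2, one_mul]
    rw [h0] at this
    norm_num at this
  have hcomb : η q * r * η p ^ 2 * η q ^ 2 * a * b * c * c * A 0 p q *
      (η p ^ 2 * r ^ 2 * η q * a * b * A 0 q p) = η p * η q * (A 0 p q * A 0 q p) := by
    calc _ = (a * a) * (b * b) * (c * c) * η p ^ 3 * η q ^ 3 * r ^ 3 *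
          (η p * η q * (A 0 p q * A 0 q p)) := by ring
      _ = _ := by rw [e1, e2, e3, f1, f2, f3]; ring
  rw [hcomb, hA] at h9
  have h10 : ((‖A 0 p q‖ ^ 2 : ℝ) : ℂ) =
      ((if p = 0 then 1 else 0) - 1 / (dC G - 1)) * ((if q = 0 then 1 else 0) - 1 / (dC G - 1))
      - 1 / (dC G - 1) * ((if p = q then 1 else 0) - 1 / dC G) + 1 / dC G := by
    apply mul_left_cancel₀ hne
    linear_combination -h9
  have h11 : ‖A 0 p q‖ ^ 2 =
      ((if p = 0 then (1 : ℝ) else 0) - 1 / (dR G - 1)) *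
        ((if q = 0 then (1 : ℝ) else 0) - 1 / (dR G - 1))
      - 1 / (dR G - 1) * ((if p = q then (1 : ℝ) else 0) - 1 / dR G) + 1 / dR G := by
    unfold dC at h10
    apply Complex.ofReal_injective
    rw [h10]
    push_cast
    simp only [apply_ite Complex.ofReal, Complex.ofReal_one, Complex.ofReal_zero]
  rw [h11]
  have g0 : dR G ≠ 0 := by linarith
  have g1 : dR G - 1 ≠ 0 := by linarith
  generalize (if p = 0 then (1 : ℝ) else 0) = u
  generalize (if q = 0 then (1 : ℝ) else 0) = v
  generalize (if p = q then (1 : ℝ) else 0) = w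
  field_simp
  ring
end

section
/- Let G be a finite abelian group of order n with d = (n+√(n²+4))/2, let (ε,η,A) be a solution of the polynomial equations for G, and set x_{g,h} := η_g·A_g(h,0) for g,h ∈ G. Then: (a) x_{g,h} is real and x_{g,h} = ε_{−h}(g)·A_g(−h,−h) = η_g⁻¹·A_g(0,h); (b) η_g·x_{g,0} = x_{g,0} (so η_g ≠ 1 implies x_{g,0} = 0); (c) x_{g+2l,h} = x_{g,h} = x_{g+h,h} for all l ∈ G; (d) Σ_{l∈G} x_{g,l} = −1/d; (e) Σ_{l∈G} x_{g,l−g}·x_{g',l−g'} = δ_{g,g'} − 1/d for all g,g' ∈ G; (f) Σ_{l∈G} x_{g,l}²·x_{g−h,l+h} = x_{g,h}² − 1/d for all g,h ∈ G. -/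
open scoped BigOperators
open Complex

/-- Properties of `x_{g,h} := η_g·A_g(h,0)` for a solution of the polynomial equations. -/
theorem x_properties
    {G : Type} [AddCommGroup G] [Fintype G] [DecidableEq G]
    (ε : G → G → ℂ) (η : G → ℂ) (A : G → G → G → ℂ)
    (hsol : PolySolution ε η A)
    (x : G → G → ℂ) (hx : ∀ g h : G, x g h = η g * A g h 0) :
    (∀ g h : G, (x g h).im = 0) ∧
    (∀ g h : G, x g h = ε (-h) g * A g (-h) (-h)) ∧
    (∀ g h : G, x g h = (η g)⁻¹ * A g 0 h) ∧
    (∀ g : G, η g * x g 0 = x g 0) ∧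
    (∀ g : G, η g ≠ 1 → x g 0 = 0) ∧
    (∀ g h l : G, x (g + l + l) h = x g h) ∧
    (∀ g h : G, x g h = x (g + h) h) ∧
    (∀ g : G, ∑ l : G, x g l = -1 / dC G) ∧
    (∀ g g' : G, ∑ l : G, x g (l - g) * x g' (l - g')
      = (if g = g' then (1 : ℂ) else 0) - 1 / dC G) ∧
    (∀ g h : G, ∑ l : G, (x g l) ^ 2 * x (g - h) (l + h) = (x g h) ^ 2 - 1 / dC G) := by
  obtain ⟨⟨pm, e1, e1', e2, e2', e3, e4, e5, e6, e7a, e7b, e8a, e8b⟩, e9⟩ := hsol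
  have sq : ∀ h g, ε h g * ε h g = 1 := by
    intro h g
    rcases pm h g with h | h <;> rw [h] <;> norm_num
  have z : ∀ g, ε 0 g = 1 := by
    intro g
    have h := e1 g 0 0
    simp only [add_zero] at h
    rw [h, sq]
  have ne : ∀ g, η g ≠ 0 := by
    intro g h
    have := e2' g
    rw [h] at this
    norm_num at this
  have nrm : ∀ g, ‖η g‖ = 1 := fun g => norm_eq_one_of_pow_eq_one (e2' g) (by norm_num)
  have cj : ∀ g, (starRingEnd ℂ) (η g) = (η g)⁻¹ := fun g =>
    (Complex.inv_eq_conj (nrm g)).symm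
  have c2 : ∀ g, (η g)⁻¹ = η g * η g := by
    intro g
    apply inv_eq_of_mul_eq_one_right
    linear_combination e2' g
  have s1 : ∀ g h, A g h 0 = η g * A g 0 h := by
    intro g h
    have := e7a g h 0
    simpa [z] using this
  have P3 : ∀ g h, x g h = (η g)⁻¹ * A g 0 h := by
    intro g h
    rw [hx, s1, c2]
    ring
  have A0 : ∀ g h, A g 0 h = η g * x g h := by
    intro g h
    rw [P3, mul_inv_cancel_left₀ (ne g)]
  have A1 : ∀ g h, A g h 0 = (η g)⁻¹ * x g h := by
    intro g h
    rw [hx, inv_mul_cancel_left₀ (ne g)]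
  have re : ∀ g h, (starRingEnd ℂ) (x g h) = x g h := by
    intro g h
    rw [hx, map_mul, ← e6, cj, ← P3, hx]
  have P2 : ∀ g h, x g h = ε (-h) g * A g (-h) (-h) := by
    intro g h
    rw [P3, e7a g 0 h]
    have := sq (-h) (g + h)
    have hn := ne g
    simp only [add_zero, zero_sub]
    calc _ = ((η g)⁻¹ * η g) * (ε (-h) (g + h) * ε (-h) (g + h)) * (ε (-h) g * A g (-h) (-h)) := by
          ring
      _ = _ := by rw [this, inv_mul_cancel₀ hn]; ring
  have P4 : ∀ g, η g * x g 0 = x g 0 := by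
    intro g
    have h := P2 g 0
    simp only [neg_zero, z, one_mul] at h
    rw [← A0, ← h]
  have em : ∀ g q, η (g - q) = η (g + q) := by
    intro g q
    have := e2 (g - q) q
    rw [sub_add_cancel] at this
    exact this.symm
  refine ⟨fun g h => Complex.conj_eq_iff_im.mp (re g h), P2, P3, P4, ?_, ?_, ?_, ?_, ?_, ?_⟩
  · intro g hg
    have h : (η g - 1) * x g 0 = 0 := by linear_combination P4 g
    exact (mul_eq_zero.mp h).resolve_left (sub_ne_zero.mpr hg)
  · intro g h l
    rw [hx, hx, e2, e5]
    simp only [add_zero]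
    linear_combination (η g * A g h 0) * (ε l (g + h) * ε l (g + h) * sq l g + sq l (g + h))
  · intro g h
    have h8 := e8a g h 0
    simp only [add_zero, cj] at h8
    rw [hx, h8, A1]
    have a := sq h g
    have b := c2 (g + h)
    have c := mul_inv_cancel₀ (ne (g + h))
    have e := e2' g
    calc _ = η g ^ 3 * (ε h g * ε h g) * ((η (g + h))⁻¹ * (η (g + h))⁻¹ * (η (g + h))⁻¹)
              * x (g + h) h := by ring
      _ = _ := by
        rw [e, a, show (η (g + h))⁻¹ * (η (g + h))⁻¹ * (η (g + h))⁻¹ = (η (g + h) ^ 3)⁻¹ by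
          rw [← inv_pow]; ring, e2']
        norm_num
  · intro g
    have h := e3 g
    simp only [hx]
    rw [← Finset.mul_sum, h, cj]
    have := mul_inv_cancel₀ (ne g)
    linear_combination (-1 / dC G) * this
  · intro g g'
    have h := e4 g g' 0
    simp only [A1, map_mul, re, map_inv₀, cj, inv_inv, if_true, one_mul] at h
    have k : ∑ l : G, x g (l - g) * x g' (l - g') =
        (η g * (η g')⁻¹) * ∑ l : G, (η g)⁻¹ * x g (l - g) * (η g' * x g' (l - g')) := by
      rw [Finset.mul_sum]
      refine Finset.sum_congr rfl fun l _ => ?_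
      have := ne g
      have := ne g'
      field_simp
    rw [k, h]
    have hg := ne g
    have hg' := ne g'
    by_cases hh : g = g'
    · subst hh
      rw [mul_inv_cancel₀ hg, inv_mul_cancel₀ hg]
      simp
    · rw [if_neg hh]
      field_simp
      try ring
  · intro g q
    have h := e9 g 0 q 0 0
    unfold Eq9At at h
    simp only [add_zero, sub_zero, zero_add, neg_zero, z, if_true, one_mul, mul_one, A0, A1, cj,
      em] at h
    have k : ∑ l : G, x g l ^ 2 * x (g - q) (l + q) =
        (η g * (η (g + q))⁻¹) *
          ∑ l : G, η g * x g l * (η g * x g l) * (η (g + q) * x (g - q) (l + q)) := by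
      rw [Finset.mul_sum]
      refine Finset.sum_congr rfl fun l _ => ?_
      have h3 := e2' g
      have hi := inv_mul_cancel₀ (ne (g + q))
      linear_combination (-(x g l ^ 2 * x (g - q) (l + q))) * ((η (g + q))⁻¹ * η (g + q) * h3 + hi)
    rw [k, h]
    have h3 := e2' g
    have hi := inv_mul_cancel₀ (ne (g + q))
    have hj := inv_mul_cancel₀ (ne g)
    have hs := sq q (g - q)
    have hg := ne g
    have hgq := ne (g + q)
    have hs' : ε q (g - q) ^ 2 = 1 := by rw [pow_two, hs]
    field_simp
    rw [hs', h3]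
    try ring
end

section
/- Let G be a finite abelian group of order n with d = (n+√(n²+4))/2, let (ε,η,A) be a solution of the polynomial equations for G, and set x_{g,h} := η_g·A_g(h,0). Then for all g,h,k ∈ G: Σ_{l∈G} x_{g,l}·x_{g−h,l+h}·x_{g−k,l+k} = |A_g(h,k)|² − 1/d. -/
open scoped BigOperators
open Complex

/-- For a solution of the polynomial equations, with `x_{g,h} := η_g·A_g(h,0)`,
`Σ_l x_{g,l}·x_{g−h,l+h}·x_{g−k,l+k} = |A_g(h,k)|² − 1/d`. -/
theorem sum_xxx_eq_abs_A_sq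
    {G : Type} [AddCommGroup G] [Fintype G] [DecidableEq G]
    (ε : G → G → ℂ) (η : G → ℂ) (A : G → G → G → ℂ)
    (hsol : PolySolution ε η A)
    (x : G → G → ℂ) (hx : ∀ g h : G, x g h = η g * A g h 0) :
    ∀ g h k : G,
      ∑ l : G, x g l * x (g - h) (l + h) * x (g - k) (l + k)
        = ((‖A g h k‖ : ℝ) : ℂ) ^ 2 - 1 / dC G := by
  intro g h k
  have hu : ∀ a, η a * (starRingEnd ℂ) (η a) = 1 := by
    intro a
    have h3 : ‖η a‖ = 1 :=
      norm_eq_one_of_pow_eq_one (hsol.eq2' a) (by norm_num)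
    rw [Complex.mul_conj, Complex.normSq_eq_norm_sq, h3]
    norm_num
  have hc : ∀ a, (starRingEnd ℂ) (η a) = η a ^ 2 := by
    intro a
    have h1 := hu a
    have h2 := hsol.eq2' a
    linear_combination (-(starRingEnd ℂ) (η a)) * h2 + (η a ^ 2) * h1
  have hneg : ∀ a b, η (a - b) = η (a + b) := by
    intro a b
    have := hsol.eq2 (a - b) b
    rw [← this]
    congr 1
    abel
  have he2 : ∀ a b, ε a b * ε a b = 1 := by
    intro a b
    rcases hsol.eps_pm a b with h | h <;> rw [h] <;> norm_num
  have hec : ∀ a b, (starRingEnd ℂ) (ε a b) = ε a b := by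
    intro a b
    rcases hsol.eps_pm a b with h | h <;> rw [h] <;> simp
  have hd : (starRingEnd ℂ) (dC G) = dC G := by
    simp [dC]
  have h9 := hsol.eq9 g h k 0 0
  unfold Eq9At at h9
  simp only [add_zero, neg_zero, if_true, one_mul] at h9
  have h8 := hsol.eq8a (g - h) h k
  have e1 : g - h + h = g := by abel
  have e2 : η (g - h + k) = η (g + h + k) := by
    have := hsol.eq2 (g - h + k) h
    rw [← this]
    congr 1
    abel
  rw [e1, e2, hneg] at h8
  have h8' := hsol.eq6 (g - h) h k
  rw [h8] at h8'
  rw [h8'] at h9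
  have hA : A g h k * (starRingEnd ℂ) (A g h k) = ((‖A g h k‖ : ℝ) : ℂ) ^ 2 := by
    rw [Complex.mul_conj, Complex.normSq_eq_norm_sq]
    push_cast
    rfl
  -- conjugated sum
  have hS : ∑ l : G, x g l * x (g - h) (l + h) * x (g - k) (l + k)
      = η g * η (g + h) * η (g + k) * (starRingEnd ℂ)
        (∑ l : G, A g 0 l * A (g - h) 0 (l + h) * A (g - k) 0 (l + k)) := by
    rw [map_sum, Finset.mul_sum]
    refine Finset.sum_congr rfl fun l _ => ?_
    rw [hx, hx, hx, hneg, hneg, hsol.eq6 g 0 l, hsol.eq6 (g - h) 0, hsol.eq6 (g - k) 0]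
    simp only [map_mul]
    ring
  have hT : ∑ l : G, A g 0 l * A (g - h) 0 (l + h) * A (g - k) 0 (l + k)
      = η g * η (g + h) * η (g + k) * (((‖A g h k‖ : ℝ) : ℂ) ^ 2 - 1 / dC G) := by
    rw [h9, ← hA]
    simp only [map_mul, hec, Complex.conj_conj, hc, map_pow]
    have a1 := he2 h (g - h)
    have a2 := he2 h (g - h + k)
    have a3 := he2 k (g - k)
    have b1 := hsol.eq2' g
    have b2 := hsol.eq2' (g + h)
    have b3 := hsol.eq2' (g + k)
    have b4 := hsol.eq2' (g + h + k)
    generalize ε h (g - h) = u1 at *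
    generalize ε h (g - h + k) = u2 at *
    generalize ε k (g - k) = u3 at *
    generalize η (g + h + k) = w4 at *
    generalize η (g + h) = w2 at *
    generalize η (g + k) = w3 at *
    generalize η g = w1 at *
    calc _ = (w1 ^ 3) ^ 2 * w2 ^ 3 * (w3 ^ 3) ^ 2 * w4 ^ 3 * (u1 * u1) * (u2 * u2) * (u3 * u3) *
          (w1 * w2 * w3) * (A g h k * (starRingEnd ℂ) (A g h k)) - w1 * w2 * w3 / dC G := by
          ring
      _ = _ := by rw [a1, a2, a3, b1, b2, b3, b4]; ring
  rw [hS, hT]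
  simp only [map_mul, map_sub, map_pow, map_div₀, map_one, hd, Complex.conj_ofReal]
  have c1 := hu g
  have c2 := hu (g + h)
  have c3 := hu (g + k)
  calc _ = (η g * (starRingEnd ℂ) (η g)) * (η (g + h) * (starRingEnd ℂ) (η (g + h))) *
        (η (g + k) * (starRingEnd ℂ) (η (g + k))) * (((‖A g h k‖ : ℝ) : ℂ) ^ 2 - 1 / dC G) := by
        ring
    _ = _ := by rw [c1, c2, c3]; ring
end

section
/- Let G = ℤ/2ℤ, so n = 2 and d = 1+√2. The polynomial equations for G have exactly one solution, namely: ε_h(g) = (−1)^{g·h}, η_0 = η_1 = 1, A_0(0,0) = A_1(0,0) = (d−2)/(d−1), A_0(0,1) = A_0(1,0) = A_1(0,1) = A_1(1,0) = −1/(d−1), A_0(1,1) = −1/(d−1), and A_1(1,1) = 1/(d−1). In particular, there is no solution with ε_h(g) = 1 for all g,h ∈ G. -/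
open scoped BigOperators
open Complex

/-- The bicharacter `ε_h(g) = (−1)^{g·h}` on `ℤ/2ℤ`. -/
noncomputable def epsZ2 : ZMod 2 → ZMod 2 → ℂ := fun h g => (-1 : ℂ) ^ (g.val * h.val)

/-- The explicit solution `A` for `G = ℤ/2ℤ`. -/
noncomputable def AZ2 : ZMod 2 → ZMod 2 → ZMod 2 → ℂ := fun g h k =>
  if h = 0 ∧ k = 0 then (dC (ZMod 2) - 2) / (dC (ZMod 2) - 1)
  else if h = 1 ∧ k = 1 ∧ g = 1 then 1 / (dC (ZMod 2) - 1)
  else -(1 / (dC (ZMod 2) - 1))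

theorem z2sum (f : ZMod 2 → ℂ) : ∑ l : ZMod 2, f l = f 0 + f 1 := Fin.sum_univ_two f

theorem z2all (P : ZMod 2 → Prop) (h0 : P 0) (h1 : P 1) : ∀ g, P g := by
  intro g
  fin_cases g
  · exact h0
  · exact h1

theorem z2a : (1 + 1 : ZMod 2) = 0 := by decide
theorem z2b : (-1 : ZMod 2) = 1 := by decide

theorem dR_two : dR (ZMod 2) = 1 + Real.sqrt 2 := by
  have h : Real.sqrt (2 ^ 2 + 4) = 2 * Real.sqrt 2 := by
    rw [show (2 ^ 2 + 4 : ℝ) = 2 ^ 2 * 2 by norm_num, Real.sqrt_mul (by norm_num),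
      Real.sqrt_sq (by norm_num)]
  unfold dR
  rw [ZMod.card]
  push_cast
  rw [h]
  ring

theorem exists_t : ∃ t : ℂ, t * t = 1 / 2 ∧ (starRingEnd ℂ) t = t ∧ (dC (ZMod 2)) = 1 + 2 * t ∧
    (dC (ZMod 2))⁻¹ = 2 * t - 1 := by
  have h2 : ((Real.sqrt 2 : ℝ) : ℂ) * ((Real.sqrt 2 : ℝ) : ℂ) = 2 := by
    rw [← Complex.ofReal_mul, Real.mul_self_sqrt (by norm_num)]
    norm_num
  have hd : dC (ZMod 2) = 1 + 2 * (((Real.sqrt 2 / 2 : ℝ) : ℂ)) := by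
    unfold dC
    rw [dR_two]
    push_cast
    ring
  refine ⟨((Real.sqrt 2 / 2 : ℝ) : ℂ), ?_, Complex.conj_ofReal _, hd, ?_⟩
  · push_cast
    linear_combination h2 / 4
  · rw [hd]
    symm
    apply eq_inv_of_mul_eq_one_left
    push_cast
    linear_combination h2

theorem AZ2_vals (t : ℂ) (ht : t * t = 1 / 2) (hd : dC (ZMod 2) = 1 + 2 * t) :
    AZ2 0 0 0 = 1 - t ∧ AZ2 1 0 0 = 1 - t ∧ AZ2 0 0 1 = -t ∧ AZ2 0 1 0 = -t ∧ AZ2 1 0 1 = -t ∧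
    AZ2 1 1 0 = -t ∧ AZ2 0 1 1 = -t ∧ AZ2 1 1 1 = t := by
  have t0 : t ≠ 0 := by
    rintro rfl
    norm_num at ht
  have e1 : (1 + 2 * t - 2) / (1 + 2 * t - 1) = 1 - t := by
    rw [show 1 + 2 * t - 1 = 2 * t by ring]
    field_simp
    linear_combination 2 * ht
  have e2 : 1 / (1 + 2 * t - 1) = t := by
    rw [show 1 + 2 * t - 1 = 2 * t by ring]
    field_simp
    linear_combination -2 * ht
  unfold AZ2
  rw [hd, e1, e2]
  simp

theorem eps_vals : epsZ2 0 0 = 1 ∧ epsZ2 0 1 = 1 ∧ epsZ2 1 0 = 1 ∧ epsZ2 1 1 = -1 := by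
  simp [epsZ2, ZMod.val_one]

theorem conj_mul_of_cube (n : ℂ) (hn : n ^ 3 = 1) : (starRingEnd ℂ) n * n = 1 := by
  have : ‖n‖ = 1 := by
    have := congrArg norm hn
    rw [norm_pow, norm_one] at this
    exact (pow_eq_one_iff_of_nonneg (norm_nonneg _) (by norm_num)).1 this
  rw [mul_comm, Complex.mul_conj, Complex.normSq_eq_norm_sq, this]
  norm_num

theorem core (t n e u v v' w : ℂ) (ht : t * t = 1 / 2) (tc : (starRingEnd ℂ) t = t)
    (hn : n ^ 3 = 1) (he : e = 1 ∨ e = -1) (hu : u = n * u) (huc : u = (starRingEnd ℂ) u)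
    (hv : v' = (starRingEnd ℂ) v) (h3 : u + v = -(starRingEnd ℂ) n * (2 * t - 1))
    (h40 : u * (starRingEnd ℂ) u + v * (starRingEnd ℂ) v = 1 - (2 * t - 1))
    (h41 : v' * (starRingEnd ℂ) v' + w * (starRingEnd ℂ) w = 1) (h7 : v' = n * e * w) :
    n = 1 ∧ u = 1 - t ∧ v = -t ∧ v' = -t ∧ w = -e * t := by
  have hnorm : n * (starRingEnd ℂ) n = 1 := by
    have : ‖n‖ = 1 := by
      have := congrArg norm hn
      rw [norm_pow, norm_one] at this
      exact (pow_eq_one_iff_of_nonneg (norm_nonneg _) (by norm_num)).1 this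
    rw [Complex.mul_conj, Complex.normSq_eq_norm_sq, this]
    norm_num
  have c2 : (starRingEnd ℂ) 2 = 2 := Complex.conj_ofNat 2
  have irr : 2 * t - 1 ≠ 0 := by
    intro h
    have : t = 1 / 2 := by linear_combination h / 2
    rw [this] at ht
    norm_num at ht
  have hn1 : n = 1 := by
    by_contra hne
    have hu0 : u = 0 := by
      have : (n - 1) * u = 0 := by linear_combination -hu
      rcases mul_eq_zero.1 this with h | h
      · exact absurd (sub_eq_zero.1 h) hne
      · exact h
    subst hu0
    rw [zero_add] at h3
    rw [h3] at h40
    simp [tc, c2] at h40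
    apply irr
    linear_combination (2 * t - 1) ^ 2 * hnorm - h40 + 4 * ht
  subst hn1
  simp only [map_one] at h3
  have hvv : v = 1 - 2 * t - u := by linear_combination h3
  have hvc : (starRingEnd ℂ) v = v := by
    rw [hvv]
    simp [tc, c2, ← huc]
  rw [hvc] at hv
  subst hv
  have hee : e * e = 1 := by rcases he with h | h <;> rw [h] <;> norm_num
  have hec : (starRingEnd ℂ) e = e := by rcases he with h | h <;> rw [h] <;> simp
  have hw : w = e * v' := by linear_combination -e * h7 - w * hee
  have hwc : (starRingEnd ℂ) w = w := by rw [hw, map_mul, hec, hvc]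
  rw [hvc, hwc, hw] at h41
  rw [hvc, ← huc] at h40
  have hsq : v' * v' = 1 / 2 := by linear_combination h41 / 2 - v' * v' * hee / 2
  have hu' : u = 1 - 2 * t - v' := by linear_combination h3
  rw [hu'] at h40
  have hfin : v' = -t := by
    have : (2 * t - 1) * (v' + t) = 0 := by
      linear_combination h40 / 2 - hsq
    rcases mul_eq_zero.1 this with h | h
    · exact absurd h irr
    · linear_combination h
  refine ⟨rfl, ?_, hfin, hfin, ?_⟩
  · rw [hu', hfin]; ring
  · rw [hw, hfin]; ring

theorem fwd (ε : ZMod 2 → ZMod 2 → ℂ) (η : ZMod 2 → ℂ) (A : ZMod 2 → ZMod 2 → ZMod 2 → ℂ)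
    (H : PolySolution ε η A) : (ε = epsZ2 ∧ η = fun _ => 1) ∧ A = AZ2 := by
  obtain ⟨t, ht, tc, hd, hdi⟩ := exists_t
  obtain ⟨a1, a2, a3, a4, a5, a6, a7, a8⟩ := AZ2_vals t ht hd
  obtain ⟨b1, b2, b3, b4⟩ := eps_vals
  have h00 := H.eq1' 0
  have h10 := H.eq1' 1
  have h01 : ε 0 1 = 1 := by
    have := H.eq1 1 0 0
    simp only [add_zero] at this
    rcases H.eps_pm 0 1 with h | h
    · exact h
    · rw [h] at this
      norm_num at this
  have hee : ε 1 1 * ε 1 1 = 1 := by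
    rcases H.eps_pm 1 1 with h | h <;> rw [h] <;> norm_num
  have k0 := core t (η 0) (ε 1 0) (A 0 0 0) (A 0 1 0) (A 0 0 1) (A 0 1 1) ht tc (H.eq2' 0)
    (H.eps_pm 1 0) (by simpa [h00] using H.eq7a 0 0 0) (H.eq6 0 0 0) (H.eq6 0 1 0)
    (by simpa [z2sum, div_eq_mul_inv, hdi] using H.eq3 0)
    (by
      have h := H.eq4 0 0 0
      have h3 := H.eq2' 0
      have hn : (starRingEnd ℂ) (η 0) * η 0 = 1 := conj_mul_of_cube _ h3
      simp only [hn, mul_assoc, z2sum, div_eq_mul_inv, hdi, if_true, one_mul, sub_zero] at h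
      exact h)
    (by simpa [z2sum] using H.eq4 0 0 1)
    (by
      have h := H.eq7a 0 0 1
      simp only [z2b, zero_add, zero_sub, h10, mul_one] at h ⊢
      linear_combination h + η 0 * A 0 1 1 * hee)
  have k1 := core t (η 1) (ε 1 1) (A 1 0 0) (A 1 1 0) (A 1 0 1) (A 1 1 1) ht tc (H.eq2' 1)
    (H.eps_pm 1 1) (by simpa [h01] using H.eq7a 1 0 0) (H.eq6 1 0 0) (H.eq6 1 1 0)
    (by simpa [z2sum, div_eq_mul_inv, hdi] using H.eq3 1)
    (by
      have h := H.eq4 1 1 0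
      have h3 := H.eq2' 1
      have hn : (starRingEnd ℂ) (η 1) * η 1 = 1 := conj_mul_of_cube _ h3
      simp only [hn, mul_assoc, z2sum, div_eq_mul_inv, hdi, if_true, one_mul, sub_self,
        zero_sub, z2b] at h
      linear_combination h)
    (by
      have h := H.eq4 1 1 1
      simp [z2sum, z2b] at h
      linear_combination h)
    (by
      have h := H.eq7a 1 0 1
      simp only [z2b, add_zero, zero_sub, z2a, h10, mul_one] at h ⊢
      exact h)
  obtain ⟨n0, p1, p2, p3, p4⟩ := k0
  obtain ⟨n1, q1, q2, q3, q4⟩ := k1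
  have he : ε 1 1 = -1 := by
    rcases H.eps_pm 1 1 with h | h
    · exfalso
      have h4 := H.eq4 0 1 1
      simp [z2sum, z2b, p3, p4, q3, q4, h, h10, tc] at h4
      rw [h4] at ht
      norm_num at ht
    · exact h
  refine ⟨⟨?_, ?_⟩, ?_⟩
  · funext h g
    revert h g
    refine z2all _ (z2all _ ?_ ?_) (z2all _ ?_ ?_) <;> simp [*]
  · funext g
    revert g
    exact z2all _ n0 n1
  · funext g h k
    revert g h k
    refine z2all _ (z2all _ (z2all _ ?_ ?_) (z2all _ ?_ ?_))
      (z2all _ (z2all _ ?_ ?_) (z2all _ ?_ ?_)) <;> simp [*]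

theorem bwd : PolySolution epsZ2 (fun _ => 1) AZ2 := by
  obtain ⟨t, ht, tc, hd, hdi⟩ := exists_t
  obtain ⟨a1, a2, a3, a4, a5, a6, a7, a8⟩ := AZ2_vals t ht hd
  obtain ⟨b1, b2, b3, b4⟩ := eps_vals
  have r1 : (0 - 1 : ZMod 2) = 1 := by decide
  refine ⟨⟨?_, ?_, ?_, ?_, ?_, ?_, ?_, ?_, ?_, ?_, ?_, ?_, ?_⟩, ?_⟩
  all_goals try unfold Eq9At
  all_goals
    repeat' refine z2all _ ?_ ?_
  all_goals
    simp [z2sum, z2a, z2b, div_eq_mul_inv, hdi, a1, a2, a3, a4, a5, a6, a7, a8, b1, b2, b3, b4, tc]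
  all_goals try grind

/-- For `G = ℤ/2ℤ` (where `d = 1+√2`), the polynomial equations have exactly one solution,
namely `ε_h(g) = (−1)^{gh}`, `η = 1`, and the explicit `A` above.  In particular there is no
solution with trivial `ε`. -/
theorem polySolution_zmod_two_unique :
    dR (ZMod 2) = 1 + Real.sqrt 2 ∧
    (∀ (ε : ZMod 2 → ZMod 2 → ℂ) (η : ZMod 2 → ℂ) (A : ZMod 2 → ZMod 2 → ZMod 2 → ℂ),
      PolySolution ε η A ↔ (ε = epsZ2 ∧ η = fun _ => 1) ∧ A = AZ2) ∧
    ¬ ∃ (η : ZMod 2 → ℂ) (A : ZMod 2 → ZMod 2 → ZMod 2 → ℂ),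
        PolySolution (fun _ _ => (1 : ℂ)) η A := by
  refine ⟨dR_two, fun ε η A => ⟨fwd ε η A, ?_⟩, ?_⟩
  · rintro ⟨⟨rfl, rfl⟩, rfl⟩
    exact bwd
  · rintro ⟨η, A, H⟩
    have h := congrFun (congrFun (fwd _ _ _ H).1.1 1) 1
    rw [eps_vals.2.2.2] at h
    norm_num at h
end

section
/- Let d = (3+√13)/2. A function x : ℤ/3ℤ → ℝ satisfies Σ_{h} x_h = −1/d, Σ_h x_h·x_{h+g} = δ_{g,0} − 1/d for all g, and Σ_h x_h²·x_{h+g} = x_g² − 1/d for all g, if and only if the triple (x_0,x_1,x_2) equals, possibly after the swap x_1 ↔ x_2 (the action of the automorphism h ↦ −h of ℤ/3ℤ), one of the following three triples: ((7−√13)/6, (1−√13)/6, (1−√13)/6), ((2−√13)/3, (5−√13+√(6(1+√13)))/12, (5−√13−√(6(1+√13)))/12), (0, (3−√13+√(2(−1+√13)))/4, (3−√13−√(2(−1+√13)))/4). -/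
open scoped BigOperators

/-- For `d = (3+√13)/2`, a function `x : ℤ/3ℤ → ℝ` satisfies the degenerate equations
(Deg1')-(Deg3') iff `(x₀,x₁,x₂)` is, possibly after the swap `x₁ ↔ x₂`, one of three
explicit triples. -/
theorem zmod_three_degenerate_solutions (x : ZMod 3 → ℝ) :
    ((∑ h : ZMod 3, x h = -1 / ((3 + Real.sqrt 13) / 2)) ∧
     (∀ g : ZMod 3, ∑ h : ZMod 3, x h * x (h + g)
        = (if g = (0 : ZMod 3) then (1 : ℝ) else 0) - 1 / ((3 + Real.sqrt 13) / 2)) ∧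
     (∀ g : ZMod 3, ∑ h : ZMod 3, (x h) ^ 2 * x (h + g)
        = (x g) ^ 2 - 1 / ((3 + Real.sqrt 13) / 2)))
    ↔
    ((x 0 = (7 - Real.sqrt 13) / 6 ∧ x 1 = (1 - Real.sqrt 13) / 6 ∧
        x 2 = (1 - Real.sqrt 13) / 6) ∨
     (x 0 = (2 - Real.sqrt 13) / 3 ∧
        x 1 = (5 - Real.sqrt 13 + Real.sqrt (6 * (1 + Real.sqrt 13))) / 12 ∧
        x 2 = (5 - Real.sqrt 13 - Real.sqrt (6 * (1 + Real.sqrt 13))) / 12) ∨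
     (x 0 = (2 - Real.sqrt 13) / 3 ∧
        x 1 = (5 - Real.sqrt 13 - Real.sqrt (6 * (1 + Real.sqrt 13))) / 12 ∧
        x 2 = (5 - Real.sqrt 13 + Real.sqrt (6 * (1 + Real.sqrt 13))) / 12) ∨
     (x 0 = 0 ∧
        x 1 = (3 - Real.sqrt 13 + Real.sqrt (2 * (-1 + Real.sqrt 13))) / 4 ∧
        x 2 = (3 - Real.sqrt 13 - Real.sqrt (2 * (-1 + Real.sqrt 13))) / 4) ∨
     (x 0 = 0 ∧
        x 1 = (3 - Real.sqrt 13 - Real.sqrt (2 * (-1 + Real.sqrt 13))) / 4 ∧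
        x 2 = (3 - Real.sqrt 13 + Real.sqrt (2 * (-1 + Real.sqrt 13))) / 4)) := by
  have hs : Real.sqrt 13 ^ 2 = 13 := Real.sq_sqrt (by norm_num)
  have hs0 : 0 ≤ Real.sqrt 13 := Real.sqrt_nonneg _
  have hs1 : 1 ≤ Real.sqrt 13 := by nlinarith
  have hr : Real.sqrt (6 * (1 + Real.sqrt 13)) ^ 2 = 6 * (1 + Real.sqrt 13) :=
    Real.sq_sqrt (by linarith)
  have hq : Real.sqrt (2 * (-1 + Real.sqrt 13)) ^ 2 = 2 * (-1 + Real.sqrt 13) :=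
    Real.sq_sqrt (by linarith)
  have he : 1 / ((3 + Real.sqrt 13) / 2) = (Real.sqrt 13 - 3) / 2 := by
    rw [div_eq_iff (by positivity)]
    linear_combination (-1/4) * hs
  have he' : -1 / ((3 + Real.sqrt 13) / 2) = -((Real.sqrt 13 - 3) / 2) := by
    rw [neg_div, he]
  have hsum : ∀ f : ZMod 3 → ℝ, ∑ h : ZMod 3, f h = f 0 + f 1 + f 2 :=
    fun f => Fin.sum_univ_three f
  have hall : ∀ P : ZMod 3 → Prop, (∀ g, P g) ↔ P 0 ∧ P 1 ∧ P 2 := by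
    intro P
    exact ⟨fun h => ⟨h 0, h 1, h 2⟩, fun h g => by
      fin_cases g
      exacts [h.1, h.2.1, h.2.2]⟩
  have e1 : (1 : ZMod 3) + 1 = 2 := by decide
  have e2 : (1 : ZMod 3) + 2 = 0 := by decide
  have e3 : (2 : ZMod 3) + 1 = 0 := by decide
  have e4 : (2 : ZMod 3) + 2 = 1 := by decide
  have n1 : (1 : ZMod 3) ≠ 0 := by decide
  have n2 : (2 : ZMod 3) ≠ 0 := by decide
  rw [he, he', hall, hall]
  simp only [hsum, e1, e2, e3, e4, n1, n2, add_zero, zero_add, if_true, if_false]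
  generalize Real.sqrt (6 * (1 + Real.sqrt 13)) = r at *
  generalize Real.sqrt (2 * (-1 + Real.sqrt 13)) = q at *
  generalize Real.sqrt 13 = s at *
  generalize x 0 = a
  generalize x 1 = b
  generalize x 2 = c
  constructor
  · rintro ⟨h1, ⟨-, h2, -⟩, ⟨h3, -, -⟩⟩
    have hc : c = -((s - 3) / 2) - a - b := by linarith
    have key : a * ((a - (7 - s) / 6) * (a - (2 - s) / 3)) = 0 := by
      subst hc
      grind
    rcases mul_eq_zero.1 key with ha | h
    · subst ha
      have : (b - c - q / 2) * (b - c + q / 2) = 0 := by grind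
      rcases mul_eq_zero.1 this with h | h
      · right; right; right; left
        refine ⟨rfl, by linarith, by linarith⟩
      · right; right; right; right
        refine ⟨rfl, by linarith, by linarith⟩
    rcases mul_eq_zero.1 h with ha | ha
    · have ha : a = (7 - s) / 6 := by linarith
      have : (b - c) ^ 2 = 0 := by grind
      have := pow_eq_zero_iff (two_ne_zero) |>.1 this
      left
      refine ⟨ha, by linarith, by linarith⟩
    · have ha : a = (2 - s) / 3 := by linarith
      have : (b - c - r / 6) * (b - c + r / 6) = 0 := by grind
      rcases mul_eq_zero.1 this with h | h
      · right; left
        refine ⟨ha, by linarith, by linarith⟩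
      · right; right; left
        refine ⟨ha, by linarith, by linarith⟩
  · rintro (⟨rfl, rfl, rfl⟩ | ⟨rfl, rfl, rfl⟩ | ⟨rfl, rfl, rfl⟩ | ⟨rfl, rfl, rfl⟩ | ⟨rfl, rfl, rfl⟩) <;>
    refine ⟨?_, ⟨?_, ?_, ?_⟩, ⟨?_, ?_, ?_⟩⟩ <;> grind
end

section
/- Let G = ℤ/4ℤ and d = 2+√5. Every function x : G×G → ℝ satisfying x_{g+2l,h} = x_{g,h} = x_{g+h,h} for all g,h,l together with equations (Deg1)–(Deg3) satisfies x_{g,h} = x_{0,h} for all g,h; moreover, the 4-tuple (x_{0,0}, x_{0,1}, x_{0,2}, x_{0,3}) equals, possibly after replacing it by (x_{0,0}, x_{0,3}, x_{0,2}, x_{0,1}) (the action of the automorphism h ↦ −h), one of the following two 4-tuples, and conversely both define solutions: ((5−√5)/4, (1−√5)/4, (1−√5)/4, (1−√5)/4) and ((2−√5)/2, (1−√5+√(2(−1+√5)))/4, 1/2, (1−√5−√(2(−1+√5)))/4). -/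
open scoped BigOperators

/-- The degenerate system (shift conditions together with (Deg1)–(Deg3)) for
`x : G×G → ℝ` on a finite abelian group `G`. -/
def DegSol {G : Type} [AddCommGroup G] [Fintype G] [DecidableEq G]
    (x : G → G → ℝ) : Prop :=
  (∀ g h l : G, x (g + l + l) h = x g h) ∧
  (∀ g h : G, x g h = x (g + h) h) ∧
  (∀ g : G, ∑ l : G, x g l = -1 / dR G) ∧
  (∀ g g' : G, ∑ l : G, x g (l - g) * x g' (l - g')
      = (if g = g' then (1 : ℝ) else 0) - 1 / dR G) ∧
  (∀ g h : G, ∑ l : G, (x g l) ^ 2 * x (g - h) (l + h) = (x g h) ^ 2 - 1 / dR G)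

/-- The first explicit solution for `G = ℤ/4ℤ`. -/
noncomputable def xOneZ4 : ZMod 4 → ZMod 4 → ℝ := fun _ h =>
  if h = 0 then (5 - Real.sqrt 5) / 4 else (1 - Real.sqrt 5) / 4

/-- The second explicit solution for `G = ℤ/4ℤ`. -/
noncomputable def xTwoZ4 : ZMod 4 → ZMod 4 → ℝ := fun _ h =>
  if h = 0 then (2 - Real.sqrt 5) / 2
  else if h = 1 then (1 - Real.sqrt 5 + Real.sqrt (2 * (-1 + Real.sqrt 5))) / 4
  else if h = 2 then 1 / 2
  else (1 - Real.sqrt 5 - Real.sqrt (2 * (-1 + Real.sqrt 5))) / 4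

theorem z4_sum (f : ZMod 4 → ℝ) : ∑ l : ZMod 4, f l = f 0 + f 1 + f 2 + f 3 :=
  Fin.sum_univ_four f

theorem z4_cases (g : ZMod 4) : g = 0 ∨ g = 1 ∨ g = 2 ∨ g = 3 := by
  revert g; decide

theorem z4_s2 : Real.sqrt 5 ^ 2 = 5 := Real.sq_sqrt (by norm_num)

theorem z4_dR : dR (ZMod 4) = 2 + Real.sqrt 5 := by
  have h : Real.sqrt (((4 : ℕ) : ℝ) ^ 2 + 4) = 2 * Real.sqrt 5 := by
    rw [Real.sqrt_eq_iff_mul_self_eq (by norm_num) (by positivity)]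
    have := z4_s2
    push_cast
    linarith
  unfold dR
  rw [ZMod.card, h]
  push_cast
  ring

theorem z4_inv : 1 / dR (ZMod 4) = Real.sqrt 5 - 2 := by
  rw [z4_dR, div_eq_iff (by positivity)]
  linarith [z4_s2]

theorem z4_neg_inv : -1 / dR (ZMod 4) = 2 - Real.sqrt 5 := by
  rw [neg_div, z4_inv]; ring

theorem z4_mk (y : ZMod 4 → ℝ) (s : ℝ) (hs : s = Real.sqrt 5)
    (h1 : y 0 + y 1 + y 2 + y 3 = 2 - s)
    (p0 : y 0 ^ 2 + y 1 ^ 2 + y 2 ^ 2 + y 3 ^ 2 = 3 - s)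
    (p1 : y 0 * y 1 + y 1 * y 2 + y 2 * y 3 + y 3 * y 0 = 2 - s)
    (p2 : 2 * (y 0 * y 2 + y 1 * y 3) = 2 - s)
    (q0 : y 0 ^ 3 + y 1 ^ 3 + y 2 ^ 3 + y 3 ^ 3 = y 0 ^ 2 - s + 2)
    (q1 : y 0 ^ 2 * y 1 + y 1 ^ 2 * y 2 + y 2 ^ 2 * y 3 + y 3 ^ 2 * y 0 = y 1 ^ 2 - s + 2)
    (q2 : y 0 ^ 2 * y 2 + y 1 ^ 2 * y 3 + y 2 ^ 2 * y 0 + y 3 ^ 2 * y 1 = y 2 ^ 2 - s + 2)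
    (q3 : y 0 ^ 2 * y 3 + y 1 ^ 2 * y 0 + y 2 ^ 2 * y 1 + y 3 ^ 2 * y 2 = y 3 ^ 2 - s + 2) :
    DegSol (fun _ h : ZMod 4 => y h) := by
  subst hs
  refine ⟨fun _ _ _ => rfl, fun _ _ => rfl, fun g => ?_, fun g g' => ?_, fun g h => ?_⟩
  · rw [z4_neg_inv, z4_sum]; exact h1
  · rw [z4_inv, z4_sum]
    have key : ∀ k : ZMod 4, y 0 * y k + y 1 * y (1 + k) + y 2 * y (2 + k) + y 3 * y (3 + k)
        = (if k = 0 then (1 : ℝ) else 0) - (Real.sqrt 5 - 2) := by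
      intro k
      rcases z4_cases k with rfl | rfl | rfl | rfl
      · rw [if_pos rfl]
        change y 0 * y 0 + y 1 * y 1 + y 2 * y 2 + y 3 * y 3 = _
        linarith
      · rw [if_neg (by decide)]
        change y 0 * y 1 + y 1 * y 2 + y 2 * y 3 + y 3 * y 0 = _
        linarith
      · rw [if_neg (by decide)]
        change y 0 * y 2 + y 1 * y 3 + y 2 * y 0 + y 3 * y 1 = _
        linarith
      · rw [if_neg (by decide)]
        change y 0 * y 3 + y 1 * y 0 + y 2 * y 1 + y 3 * y 2 = _
        linarith
    have k := key (g - g')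
    simp only [sub_eq_zero] at k
    rw [← k, ← z4_sum (fun l => y (l - g) * y (l - g')), ← Equiv.sum_comp (Equiv.addRight g), z4_sum]
    simp only [Equiv.coe_addRight, add_sub_cancel_right, add_sub_assoc, zero_add, sub_self]
  · rw [z4_inv, z4_sum]
    rcases z4_cases h with rfl | rfl | rfl | rfl
    · change y 0 ^ 2 * y 0 + y 1 ^ 2 * y 1 + y 2 ^ 2 * y 2 + y 3 ^ 2 * y 3 = _
      linarith
    · change y 0 ^ 2 * y 1 + y 1 ^ 2 * y 2 + y 2 ^ 2 * y 3 + y 3 ^ 2 * y 0 = _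
      linarith
    · change y 0 ^ 2 * y 2 + y 1 ^ 2 * y 3 + y 2 ^ 2 * y 0 + y 3 ^ 2 * y 1 = _
      linarith
    · change y 0 ^ 2 * y 3 + y 1 ^ 2 * y 0 + y 2 ^ 2 * y 1 + y 3 ^ 2 * y 2 = _
      linarith

theorem z4_one : DegSol xOneZ4 := by
  have hs := z4_s2
  set s := Real.sqrt 5 with hsd
  have e0 : xOneZ4 0 0 = (5 - s) / 4 := by rw [hsd]; rfl
  have e1 : xOneZ4 0 1 = (1 - s) / 4 := by rw [hsd]; rfl
  have e2 : xOneZ4 0 2 = (1 - s) / 4 := by rw [hsd]; rfl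
  have e3 : xOneZ4 0 3 = (1 - s) / 4 := by rw [hsd]; rfl
  have h3 : s ^ 3 = 5 * s := by rw [pow_succ, hs]
  refine z4_mk (xOneZ4 0) s hsd ?_ ?_ ?_ ?_ ?_ ?_ ?_ ?_ <;> rw [e0, e1, e2, e3] <;> ring_nf <;>
    simp only [hs, h3] <;> ring

theorem z4_two : DegSol xTwoZ4 := by
  have hs := z4_s2
  have h1 : (1 : ℝ) ≤ Real.sqrt 5 := Real.one_le_sqrt.mpr (by norm_num)
  have hr : Real.sqrt (2 * (-1 + Real.sqrt 5)) ^ 2 = 2 * (-1 + Real.sqrt 5) :=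
    Real.sq_sqrt (by linarith)
  set s := Real.sqrt 5 with hsd
  set r := Real.sqrt (2 * (-1 + s)) with hrd
  have e0 : xTwoZ4 0 0 = (2 - s) / 2 := by rw [hsd]; rfl
  have e1 : xTwoZ4 0 1 = (1 - s + r) / 4 := by rw [hrd, hsd]; rfl
  have e2 : xTwoZ4 0 2 = 1 / 2 := by rfl
  have e3 : xTwoZ4 0 3 = (1 - s - r) / 4 := by rw [hrd, hsd]; rfl
  have h3 : s ^ 3 = 5 * s := by rw [pow_succ, hs]
  have r3 : r ^ 3 = 2 * (-1 + s) * r := by rw [pow_succ, hr]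
  refine z4_mk (xTwoZ4 0) s hsd ?_ ?_ ?_ ?_ ?_ ?_ ?_ ?_ <;> rw [e0, e1, e2, e3] <;> ring_nf <;>
    simp only [hs, h3, hr, r3] <;> ring_nf <;> simp only [hs, h3] <;> ring

/-- The purely algebraic part. -/
theorem z4_alg (s r a b c e f k : ℝ) (hs : s ^ 2 = 5) (hs1 : 2 < s) (hs3 : s < 3)
    (hr : r ^ 2 = 2 * (-1 + s))
    (A0 : a + c + e + k = 2 - s) (A1 : b + c + f + k = 2 - s)
    (B0 : a * a + c * c + e * e + k * k = 1 - (s - 2))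
    (B1 : b * b + c * c + f * f + k * k = 1 - (s - 2))
    (B2 : a * e + c * k + e * a + k * c = 0 - (s - 2))
    (B3 : a * k + c * b + e * c + k * f = 0 - (s - 2))
    (B4 : a * c + c * f + e * k + k * b = 0 - (s - 2))
    (C0 : a ^ 2 * a + c ^ 2 * c + e ^ 2 * e + k ^ 2 * k = a ^ 2 - (s - 2))
    (C1 : b ^ 2 * b + c ^ 2 * c + f ^ 2 * f + k ^ 2 * k = b ^ 2 - (s - 2))
    (C2 : a ^ 2 * e + c ^ 2 * k + e ^ 2 * a + k ^ 2 * c = e ^ 2 - (s - 2)) :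
    (b = a ∧ f = e) ∧
    ((a = (5 - s) / 4 ∧ c = (1 - s) / 4 ∧ e = (1 - s) / 4 ∧ k = (1 - s) / 4) ∨
     (a = (2 - s) / 2 ∧ c = (1 - s + r) / 4 ∧ e = 1 / 2 ∧ k = (1 - s - r) / 4) ∨
     (a = (2 - s) / 2 ∧ c = (1 - s - r) / 4 ∧ e = 1 / 2 ∧ k = (1 - s + r) / 4)) := by
  have hf : f = a + e - b := by linarith
  have hk : k = 2 - s - a - e - c := by linarith
  have hu : (a + e) * (c + k) = 2 - s := by
    subst hf; linear_combination (B3 + B4) / 2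
  have hu2 : (a + e - (3 - s) / 2) * (a + e - (1 - s) / 2) = 0 := by
    subst hk; linear_combination -hu + hs / 4
  have hba : (b - a) * (b - e) = 0 := by
    subst hf; linear_combination (B1 - B0) / 2
  have hb : b = a := by
    rcases mul_eq_zero.1 hba with h | h
    · linarith
    · have hbe : b = e := by linarith
      have hfa : f = a := by linarith
      rw [hbe, hfa] at C1
      have : (a - e) * (a + e) = 0 := by linear_combination C1 - C0
      rcases mul_eq_zero.1 this with h | h
      · linarith
      · rw [h] at hu; linarith
  refine ⟨⟨hb, by linarith⟩, ?_⟩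
  have hP : a * e + c * k = (2 - s) / 2 := by linarith
  rcases mul_eq_zero.1 hu2 with h | h
  · have ha : a = (3 - s) / 2 - e := by linarith
    have hk : k = (1 - s) / 2 - c := by linarith
    have he : (e - 1 / 2) * (e - (1 - s) / 4) = 0 := by
      subst ha hk
      linear_combination -(C2 - (1 - s) / 2 * hP) / 2 + hs / 8
    rcases mul_eq_zero.1 he with h | h
    · right
      have he : e = 1 / 2 := by linarith
      subst he
      have ha : a = (2 - s) / 2 := by linarith
      subst ha hk
      have : (c - (1 - s + r) / 4) * (c - (1 - s - r) / 4) = 0 := by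
        linear_combination -hP - hr / 16 + hs / 16
      rcases mul_eq_zero.1 this with h | h
      · left; refine ⟨rfl, ?_, rfl, ?_⟩ <;> linarith
      · right; refine ⟨rfl, ?_, rfl, ?_⟩ <;> linarith
    · left
      have he : e = (1 - s) / 4 := by linarith
      have ha : a = (5 - s) / 4 := by linarith
      rw [he, ha, hk] at hP
      have : (c - (1 - s) / 4) ^ 2 = 0 := by
        linear_combination -hP + hs / 8
      have := pow_eq_zero_iff (two_ne_zero) |>.1 this
      refine ⟨ha, ?_, he, ?_⟩ <;> linarith
  · exfalso
    have ha : a = (1 - s) / 2 - e := by linarith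
    have hk : k = (3 - s) / 2 - c := by linarith
    have he : e = (1 - s) / 4 := by
      have : (1 - s) / 2 * (e - (1 - s) / 4) = 0 := by
        subst ha hk
        linear_combination -(C2 - (3 - s) / 2 * hP) + hs / 8
      rcases mul_eq_zero.1 this with h | h <;> linarith
    have ha : a = (1 - s) / 4 := by linarith
    rw [he, ha, hk] at C0 hP
    have E : (3 - s) / 2 = 0 := by
      linear_combination C0 + 3 * (3 - s) / 2 * hP + (s / 4 - 7 / 8) * hs
    linarith

/-- For `G = ℤ/4ℤ` (where `d = 2+√5`): every solution of the degenerate system satisfies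
`x_{g,h} = x_{0,h}`, and its value tuple is, possibly after the swap `h ↦ −h`, one of two
explicit tuples; conversely both tuples define solutions. -/
theorem degSol_zmod_four_classification :
    dR (ZMod 4) = 2 + Real.sqrt 5 ∧
    (∀ x : ZMod 4 → ZMod 4 → ℝ, DegSol x →
      (∀ g h : ZMod 4, x g h = x 0 h) ∧
      ((x 0 0 = (5 - Real.sqrt 5) / 4 ∧ x 0 1 = (1 - Real.sqrt 5) / 4 ∧
          x 0 2 = (1 - Real.sqrt 5) / 4 ∧ x 0 3 = (1 - Real.sqrt 5) / 4) ∨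
       (x 0 0 = (2 - Real.sqrt 5) / 2 ∧
          x 0 1 = (1 - Real.sqrt 5 + Real.sqrt (2 * (-1 + Real.sqrt 5))) / 4 ∧
          x 0 2 = 1 / 2 ∧
          x 0 3 = (1 - Real.sqrt 5 - Real.sqrt (2 * (-1 + Real.sqrt 5))) / 4) ∨
       (x 0 0 = (2 - Real.sqrt 5) / 2 ∧
          x 0 1 = (1 - Real.sqrt 5 - Real.sqrt (2 * (-1 + Real.sqrt 5))) / 4 ∧
          x 0 2 = 1 / 2 ∧
          x 0 3 = (1 - Real.sqrt 5 + Real.sqrt (2 * (-1 + Real.sqrt 5))) / 4))) ∧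
    DegSol xOneZ4 ∧ DegSol xTwoZ4 := by
  have hs := z4_s2
  have h2 : (2 : ℝ) < Real.sqrt 5 := Real.lt_sqrt (by norm_num) |>.2 (by norm_num)
  have h3 : Real.sqrt 5 < 3 := (Real.sqrt_lt' (by norm_num)).2 (by norm_num)
  have hr : Real.sqrt (2 * (-1 + Real.sqrt 5)) ^ 2 = 2 * (-1 + Real.sqrt 5) :=
    Real.sq_sqrt (by linarith)
  refine ⟨z4_dR, ?_, z4_one, z4_two⟩
  rintro x ⟨S1, S2, D1, D2, D3⟩
  have S20 : ∀ h, x 2 h = x 0 h := fun h => S1 0 h 1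
  have S31 : ∀ h, x 3 h = x 1 h := fun h => S1 1 h 1
  have S11 : x 1 1 = x 0 1 := (S2 0 1).symm
  have S13 : x 1 3 = x 0 3 := (S31 3).symm.trans (S2 0 3).symm
  have A0 := D1 0
  have A1 := D1 1
  have B0 := D2 0 0
  have B1 := D2 1 1
  have B2 := D2 0 2
  have B3 := D2 0 1
  have B4 := D2 0 3
  have C0 := D3 0 0
  have C1 := D3 1 0
  have C2 := D3 0 2
  rw [z4_sum, z4_neg_inv] at A0 A1
  rw [z4_sum, z4_inv] at B0 B1 B2 B3 B4 C0 C1 C2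
  rw [if_pos rfl] at B0 B1
  rw [if_neg (by decide)] at B2 B3 B4
  change x 0 0 * x 0 0 + x 0 1 * x 0 1 + x 0 2 * x 0 2 + x 0 3 * x 0 3 = _ at B0
  change x 1 3 * x 1 3 + x 1 0 * x 1 0 + x 1 1 * x 1 1 + x 1 2 * x 1 2 = _ at B1
  change x 0 0 * x 2 2 + x 0 1 * x 2 3 + x 0 2 * x 2 0 + x 0 3 * x 2 1 = _ at B2
  change x 0 0 * x 1 3 + x 0 1 * x 1 0 + x 0 2 * x 1 1 + x 0 3 * x 1 2 = _ at B3
  change x 0 0 * x 3 1 + x 0 1 * x 3 2 + x 0 2 * x 3 3 + x 0 3 * x 3 0 = _ at B4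
  change x 0 0 ^ 2 * x 0 0 + x 0 1 ^ 2 * x 0 1 + x 0 2 ^ 2 * x 0 2 + x 0 3 ^ 2 * x 0 3 = _ at C0
  change x 1 0 ^ 2 * x 1 0 + x 1 1 ^ 2 * x 1 1 + x 1 2 ^ 2 * x 1 2 + x 1 3 ^ 2 * x 1 3 = _ at C1
  change x 0 0 ^ 2 * x 2 2 + x 0 1 ^ 2 * x 2 3 + x 0 2 ^ 2 * x 2 0 + x 0 3 ^ 2 * x 2 1 = _ at C2
  simp only [S20, S31, S11, S13] at A0 A1 B0 B1 B2 B3 B4 C0 C1 C2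
  obtain ⟨⟨hb, hf⟩, hc⟩ := z4_alg (Real.sqrt 5) (Real.sqrt (2 * (-1 + Real.sqrt 5)))
    (x 0 0) (x 1 0) (x 0 1) (x 0 2) (x 1 2) (x 0 3) hs h2 h3 hr
    A0 A1 B0 (by linarith) B2 B3 B4 C0 C1 C2
  refine ⟨fun g h => ?_, hc⟩
  have key : x 1 h = x 0 h := by
    rcases z4_cases h with rfl | rfl | rfl | rfl
    exacts [hb, S11, hf, S13]
  rcases z4_cases g with rfl | rfl | rfl | rfl
  exacts [rfl, key, S20 h, (S31 h).trans key]
end
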